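/- Let p and q be positive integers. The number of (p,q)-connected permutations in S_ann-nc(p,q) equals (2pq/(p+q))·C(2p-1,p)·C(2q-1,q), where C(m,k) denotes the binomial coefficient; equivalently, (p+q) times the cardinality of {τ ∈ S_ann-nc(p,q) : τ is (p,q)-connected} equals 2pq·C(2p-1,p)·C(2q-1,q). -/

import Mathlib

/-- The permutation induced by `f` on the subset `B`: an element `b` is sent to the first
element of the sequence `f b, f (f b), f (f (f b)), ...` that lies in `B`
(and is left fixed if no iterate ever returns to `B`). -/
noncomputable def induced {α : Type*} (f : α → α) (B : Set α) (b : α) : α := by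
  classical
  exact if h : ∃ k, 0 < k ∧ f^[k] b ∈ B then f^[Nat.find h] b else b

/-- `A` is an orbit of the permutation `τ`. -/
def IsOrbit {α : Type*} (τ : Equiv.Perm α) (A : Set α) : Prop :=
  ∃ a, A = {b | τ.SameCycle a b}

/-- The number of orbits of `τ` (fixed points count as orbits). -/
noncomputable def numOrbits {α : Type*} (τ : Equiv.Perm α) : ℕ :=
  Set.ncard {A : Set α | IsOrbit τ A}

/-- `induced f S` acts on `a, b, c` as the 3-cycle `(a, b, c)`. -/
def MapsCyc3 {α : Type*} (f : α → α) (S : Set α) (a b c : α) : Prop :=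
  induced f S a = b ∧ induced f S b = c ∧ induced f S c = a

/-- `induced f S` acts on `a, b, c, d` as the 4-cycle `(a, b, c, d)`. -/
def MapsCyc4 {α : Type*} (f : α → α) (S : Set α) (a b c d : α) : Prop :=
  induced f S a = b ∧ induced f S b = c ∧ induced f S c = d ∧ induced f S d = a

/-- `induced f S` acts on `a, b, c, d` as the product of transpositions `(a, c)(b, d)`. -/
def MapsSwap2 {α : Type*} (f : α → α) (S : Set α) (a b c d : α) : Prop :=
  induced f S a = c ∧ induced f S c = a ∧ induced f S b = d ∧ induced f S d = b

/-- `induced f S` acts on `x, y` as the transposition `(x, y)`. -/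
def MapsSwap {α : Type*} (f : α → α) (S : Set α) (x y : α) : Prop :=
  induced f S x = y ∧ induced f S y = x

/-- `σ` is standard with respect to the "forward cycle" `γ₀`, i.e. `σ∣B = γ₀∣B` for
every orbit `B` of `σ`. -/
def DiscStandardRel {n : ℕ} (γ₀ σ : Equiv.Perm (Fin n)) : Prop :=
  ∀ A : Set (Fin n), IsOrbit σ A → ∀ b ∈ A, induced (⇑σ) A b = induced (⇑γ₀) A b

/-- The orbit partition of `σ` has no crossing: there are no `a < b < c < d` with
`a, c` in one orbit and `b, d` in a different orbit. -/
def OrbitsNoCrossing {n : ℕ} (σ : Equiv.Perm (Fin n)) : Prop :=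
  ¬ ∃ a b c d : Fin n, a < b ∧ b < c ∧ c < d ∧
      σ.SameCycle a c ∧ σ.SameCycle b d ∧ ¬ σ.SameCycle a b

/-- Disc non-crossing relative to a given forward cycle `γ₀`. -/
def DiscNCRel {n : ℕ} (γ₀ σ : Equiv.Perm (Fin n)) : Prop :=
  DiscStandardRel γ₀ σ ∧ OrbitsNoCrossing σ

/-- The set `S_disc-nc(n)` of disc non-crossing permutations of `[n]`
(here `[n] = {1, …, n}` is modelled by `Fin n`, and the forward cycle
`γ₀ = (1, 2, …, n)` is `finRotate n`). -/
def DiscNC {n : ℕ} (σ : Equiv.Perm (Fin n)) : Prop :=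
  DiscNCRel (finRotate n) σ

/-- The external points `{1, …, p}` (0-indexed: values `< p`). -/
def extSet (p q : ℕ) : Set (Fin (p + q)) := {i | (i : ℕ) < p}

/-- The internal points `{p+1, …, p+q}` (0-indexed: values `≥ p`). -/
def intSet (p q : ℕ) : Set (Fin (p + q)) := {i | p ≤ (i : ℕ)}

/-- `γ_ext = (1, 2, …, p)`, the forward cycle on the external points. -/
def gammaExt (p q : ℕ) : Equiv.Perm (Fin (p + q)) :=
  ((List.finRange (p + q)).take p).formPerm

/-- `γ_int = (p+1, p+2, …, p+q)`, the forward cycle on the internal points. -/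
def gammaInt (p q : ℕ) : Equiv.Perm (Fin (p + q)) :=
  ((List.finRange (p + q)).drop p).formPerm

/-- `γ = γ_ext · γ_int`. -/
def gammaAnn (p q : ℕ) : Equiv.Perm (Fin (p + q)) := gammaExt p q * gammaInt p q

/-- `λ_{x,y}`: the permutation fixing `x` and `y` and cycling the remaining points as
`(γ_ext(x), γ_ext²(x), …, γ_ext^{p-1}(x), γ_int(y), γ_int²(y), …, γ_int^{q-1}(y))`. -/
def lamPerm (p q : ℕ) (x y : Fin (p + q)) : Equiv.Perm (Fin (p + q)) :=
  (((List.range (p - 1)).map fun k => (gammaExt p q ^ (k + 1)) x) ++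
    ((List.range (q - 1)).map fun k => (gammaInt p q ^ (k + 1)) y)).formPerm

/-- `τ` is standard in `(p,q)`-annular sense. -/
def AnnStandard (p q : ℕ) (τ : Equiv.Perm (Fin (p + q))) : Prop :=
  (∀ A : Set (Fin (p + q)), IsOrbit τ A →
    (∀ b ∈ A ∩ extSet p q,
        induced (⇑τ) (A ∩ extSet p q) b = induced (⇑(gammaExt p q)) (A ∩ extSet p q) b) ∧
    (∀ b ∈ A ∩ intSet p q,
        induced (⇑τ) (A ∩ intSet p q) b = induced (⇑(gammaInt p q)) (A ∩ intSet p q) b)) ∧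
  (∀ A : Set (Fin (p + q)), IsOrbit τ A →
    (A ∩ extSet p q).Nonempty → (A ∩ intSet p q).Nonempty →
    (∃! a, a ∈ A ∩ extSet p q ∧ τ a ∈ intSet p q) ∧
    (∃! a, a ∈ A ∩ intSet p q ∧ τ a ∈ extSet p q))

/-- The annular crossing pattern (AC-1). -/
def AC1 (p q : ℕ) (τ : Equiv.Perm (Fin (p + q))) : Prop :=
  ∃ a b c d : Fin (p + q), List.Pairwise (· ≠ ·) [a, b, c, d] ∧
    MapsCyc4 (⇑(gammaAnn p q)) {a, b, c, d} a b c d ∧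
    MapsSwap2 (⇑τ) {a, b, c, d} a b c d

/-- The annular crossing pattern (AC-2). -/
def AC2 (p q : ℕ) (τ : Equiv.Perm (Fin (p + q))) : Prop :=
  ∃ a b c x y : Fin (p + q), List.Pairwise (· ≠ ·) [a, b, c, x, y] ∧
    x ∈ extSet p q ∧ y ∈ intSet p q ∧
    MapsCyc3 (⇑(lamPerm p q x y)) {a, b, c} a b c ∧
    MapsCyc3 (⇑τ) {a, b, c, x, y} a c b ∧
    MapsSwap (⇑τ) {a, b, c, x, y} x y

/-- The annular crossing pattern (AC-3). -/
def AC3 (p q : ℕ) (τ : Equiv.Perm (Fin (p + q))) : Prop :=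
  ∃ a b c d x y : Fin (p + q), List.Pairwise (· ≠ ·) [a, b, c, d, x, y] ∧
    x ∈ extSet p q ∧ y ∈ intSet p q ∧
    MapsCyc4 (⇑(lamPerm p q x y)) {a, b, c, d} a b c d ∧
    MapsSwap2 (⇑τ) {a, b, c, d, x, y} a b c d ∧
    MapsSwap (⇑τ) {a, b, c, d, x, y} x y

/-- The set `S_ann-nc(p,q)` of `(p,q)`-annular non-crossing permutations. -/
def AnnNC (p q : ℕ) (τ : Equiv.Perm (Fin (p + q))) : Prop :=
  AnnStandard p q τ ∧ ¬ AC1 p q τ ∧ ¬ AC2 p q τ ∧ ¬ AC3 p q τ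

/-- A `(p,q)`-connecting set: meets both the external and internal points. -/
def ConnectingBlock (p q : ℕ) (B : Set (Fin (p + q))) : Prop :=
  (B ∩ extSet p q).Nonempty ∧ (B ∩ intSet p q).Nonempty

/-- `τ` is `(p,q)`-connected: it has a `(p,q)`-connecting orbit. -/
def AnnConnected (p q : ℕ) (τ : Equiv.Perm (Fin (p + q))) : Prop :=
  ∃ A : Set (Fin (p + q)), IsOrbit τ A ∧ ConnectingBlock p q A

/-- A family of blocks has no crossing: no `a < b < c < d` with `a, c` in one block and
`b, d` in a different block. -/
def NoCrossing {n : ℕ} (ρ : Set (Set (Fin n))) : Prop :=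
  ¬ ∃ (a b c d : Fin n) (B C : Set (Fin n)), B ∈ ρ ∧ C ∈ ρ ∧ B ≠ C ∧
      a < b ∧ b < c ∧ c < d ∧ a ∈ B ∧ c ∈ B ∧ b ∈ C ∧ d ∈ C

/-!
A `(p,q)`-connected permutation has an arc `x ↦ τ x` from the outer circle to the inner one.
Rotating the two circles moves this arc to `p ↦ p + 1`, and an annular noncrossing permutation
containing the arc `p ↦ p + 1` is the same thing as an ordinary noncrossing permutation of
`1, …, p + q` containing it. Drawing an arc above the line from each `i` to each `τ i` with
`i < τ i`, a disc noncrossing permutation is determined by recording at each point whether an arc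
ends there and whether one starts there; the number of arcs above a gap is then the height of a
two-coloured Motzkin path. The numbers of such paths satisfy Pascal's recurrence applied twice, so
there are `(c / p) · C(2p, p + c)` of them from height `0` to height `c` with a final ascent in
step `p`.

Counting pairs (permutation with `c` crossing arcs, one of those arcs) in two ways gives
`c · C(2p, p + c) · C(2q, q + c)` permutations with `c` outward arcs, and the sum over `c ≥ 1`
telescopes.
-/

open Equiv.Perm

/-- The orbit of `a` under `τ`, as a set. -/
def orbitOf {α : Type*} (τ : Equiv.Perm α) (a : α) : Set α := {b | τ.SameCycle a b}

theorem sameCycle_apply_self {α : Type*} (f : Equiv.Perm α) (a : α) : f.SameCycle a (f a) :=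
  sameCycle_apply_right.2 (.refl f a)

theorem sameCycle_iterate {α : Type*} (f : Equiv.Perm α) (a : α) (k : ℕ) :
    f.SameCycle a (f^[k] a) :=
  ⟨k, by rw [zpow_natCast, iterate_eq_pow]⟩

theorem orbitOf_eq_of_sameCycle {α : Type*} {f : Equiv.Perm α} {a b : α} (h : f.SameCycle a b) :
    orbitOf f a = orbitOf f b :=
  Set.ext fun _ => ⟨h.symm.trans, h.trans⟩

theorem orbitOf_subset_of_not_sameCycle {α : Type*} {f : Equiv.Perm α} {x y a : α}
    (hxy : f.SameCycle x y) (hxa : ¬ f.SameCycle x a) : orbitOf f a ⊆ {u | u ≠ x ∧ u ≠ y} :=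
  fun _ hu => ⟨fun h => hxa (h ▸ hu.symm), fun h => hxa (hxy.trans (h ▸ hu.symm))⟩

section Induced

variable {α : Type*}

theorem induced_eq_iterate {f : α → α} {B : Set α} {b : α} {k : ℕ} (hk : 0 < k)
    (hmem : f^[k] b ∈ B) (hmin : ∀ j, 0 < j → j < k → f^[j] b ∉ B) :
    induced f B b = f^[k] b := by
  classical
  have h : ∃ k, 0 < k ∧ f^[k] b ∈ B := ⟨k, hk, hmem⟩
  have hfind : Nat.find h = k :=
    (Nat.find_eq_iff h).2 ⟨⟨hk, hmem⟩, fun j hj hj' => hmin j hj'.1 hj hj'.2⟩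
  rw [induced, dif_pos h]
  convert congrArg (fun k => f^[k] b) hfind

theorem induced_eq_apply {f : α → α} {B : Set α} {b : α} (h : f b ∈ B) : induced f B b = f b :=
  induced_eq_iterate one_pos h fun _ _ _ => by omega

theorem induced_image_of_semiconj {g f f' : α → α} (hg : g.Injective)
    (h : Function.Semiconj g f f') (B : Set α) (b : α) :
    induced f' (g '' B) (g b) = g (induced f B b) := by
  classical
  have hmem (k : ℕ) : f'^[k] (g b) ∈ g '' B ↔ f^[k] b ∈ B := by
    rw [← (h.iterate_right k).eq, hg.mem_set_image]
  by_cases hB : ∃ k, 0 < k ∧ f^[k] b ∈ B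
  · obtain ⟨h0, hfind⟩ := Nat.find_spec hB
    have hmin : ∀ j, 0 < j → j < Nat.find hB → f^[j] b ∉ B :=
      fun j hj hlt hj' => Nat.find_min hB hlt ⟨hj, hj'⟩
    rw [induced_eq_iterate h0 hfind hmin, (h.iterate_right _).eq]
    exact induced_eq_iterate h0 ((hmem _).2 hfind) fun j hj hlt => (hmem j).not.2 (hmin j hj hlt)
  · simp only [induced, hmem, dif_neg hB]

variable [Finite α] {f : Equiv.Perm α} {B : Set α} {b c : α}

theorem exists_induced_eq_iterate (h : f.SameCycle b c) (hc : c ∈ B) :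
    ∃ k, 0 < k ∧ f^[k] b ∈ B ∧ (∀ j, 0 < j → j < k → f^[j] b ∉ B) ∧
      induced f B b = f^[k] b := by
  classical
  have hreturn : ∃ k, 0 < k ∧ f^[k] b ∈ B := by
    obtain ⟨k, hk, -, rfl⟩ := h.exists_pow_eq''
    exact ⟨k, hk, by rwa [iterate_eq_pow]⟩
  have hmin : ∀ j, 0 < j → j < Nat.find hreturn → f^[j] b ∉ B :=
    fun j h0 hj hj' => Nat.find_min hreturn hj ⟨h0, hj'⟩
  obtain ⟨h0, hmem⟩ := Nat.find_spec hreturn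
  exact ⟨_, h0, hmem, hmin, induced_eq_iterate h0 hmem hmin⟩

theorem induced_apply_of_notMem (h : f.SameCycle b c) (hc : c ∈ B) (hb : f b ∉ B) :
    induced f B (f b) = induced f B b := by
  obtain ⟨k, hk, hmem, hmin, heq⟩ := exists_induced_eq_iterate h hc
  obtain ⟨k, rfl⟩ := Nat.exists_eq_add_of_lt hk
  have hk0 : k ≠ 0 := by rintro rfl; exact hb hmem
  simp only [zero_add] at hmem hmin heq
  rw [heq, Function.iterate_succ_apply] at *
  exact induced_eq_iterate (by omega) hmem fun j h0 hj => hmin (j + 1) (by omega) (by omega)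

/-- A relation between `b` and its image under the induced permutation can be checked by following
the trajectory of `b` backwards from its first return to `B`. -/
theorem induced_rec {P : α → α → Prop} (hmem : ∀ b, f b ∈ B → P b (f b))
    (hstep : ∀ b, f b ∉ B → P (f b) (induced f B b) → P b (induced f B b))
    (h : f.SameCycle b c) (hc : c ∈ B) : P b (induced f B b) := by
  obtain ⟨k, hk, hkB, -⟩ := exists_induced_eq_iterate h hc
  clear h hc
  induction k generalizing b with
  | zero => omega
  | succ k ih =>
    by_cases hb : f b ∈ B
    · exact induced_eq_apply hb ▸ hmem b hb
    · have hk0 : 0 < k := Nat.pos_of_ne_zero (by rintro rfl; exact hb hkB)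
      have heq := induced_apply_of_notMem (sameCycle_iterate f b (k + 1)) hkB hb
      exact hstep b hb (heq ▸ ih hk0 hkB)

theorem induced_mem (h : f.SameCycle b c) (hc : c ∈ B) : induced f B b ∈ B :=
  induced_rec (P := fun _ c => c ∈ B) (fun _ => id) (fun _ _ => id) h hc

theorem sameCycle_induced (h : f.SameCycle b c) (hc : c ∈ B) : f.SameCycle b (induced f B b) :=
  induced_rec (P := fun b c => f.SameCycle b c) (fun b _ => sameCycle_apply_self f b)
    (fun _ _ => sameCycle_apply_left.1) h hc

theorem mem_of_mapsTo_induced {T : Set α} (hT : Set.MapsTo (induced f B) T T) (hb : b ∈ T)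
    (hc : c ∈ B) (h : f.SameCycle b c) : c ∈ T := by
  obtain ⟨k, hk, -, rfl⟩ := h.exists_pow_eq''
  rw [← iterate_eq_pow] at *
  induction k using Nat.strong_induction_on generalizing b with
  | _ k ih =>
    obtain ⟨m, hm, hmB, hmin, heq⟩ := exists_induced_eq_iterate h hc
    have hmT : f^[m] b ∈ T := heq ▸ hT hb
    rcases lt_trichotomy m k with hlt | rfl | hlt
    · have hsplit : f^[k] b = f^[k - m] (f^[m] b) := by
        rw [← Function.iterate_add_apply]; congr 2; omega
      rw [hsplit] at hc h ⊢
      exact ih (k - m) (by omega) hmT (by omega) hc (sameCycle_iterate f _ _)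
    · exact hmT
    · exact absurd hc (hmin k hk hlt)

theorem induced_inter_of_orbit_subset {A : Set α} (hA : orbitOf f b ⊆ A) (h : f.SameCycle b c)
    (hc : c ∈ B) : induced f (B ∩ A) b = induced f B b := by
  obtain ⟨k, hk, hmem, hmin, heq⟩ := exists_induced_eq_iterate h hc
  rw [heq]
  refine induced_eq_iterate hk ⟨hmem, hA ?_⟩ fun j h0 hj hj' => hmin j h0 hj hj'.1
  exact heq ▸ sameCycle_induced h hc

theorem exists_apply_eq_induced {i : α}
    (hi : i ∈ B) (hfi : f i ∉ B) : ∃ j ∉ B, f.SameCycle i j ∧ f j = induced f B i := by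
  have hP := induced_rec (f := f) (B := B)
    (P := fun i k => f i = k ∨ ∃ j ∉ B, f.SameCycle i j ∧ f j = k) (fun _ _ => .inl rfl)
    (fun i hi hP => .inr (hP.elim (fun hP => ⟨f i, hi, sameCycle_apply_self f i, hP⟩)
      fun ⟨j, hj, hij, hP⟩ => ⟨j, hj, sameCycle_apply_left.1 hij, hP⟩)) (.refl f i) hi
  exact hP.resolve_left fun hP => hfi (hP ▸ induced_mem (.refl f i) hi)

end Induced

section CyclicSucc

variable {α β : Type*} [LinearOrder β]

/-- `j` is the successor of `i` when `B` is traversed cyclically in the increasing order of the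
rank `r`: either `j` comes next after `i`, or `i` is last and `j` is first. -/
def IsCyclicSucc (r : α → β) (B : Set α) (i j : α) : Prop :=
  j ∈ B ∧ ((r i < r j ∧ ∀ k ∈ B, r k ≤ r i ∨ r j ≤ r k) ∨ ∀ k ∈ B, r j ≤ r k ∧ r k ≤ r i)

/-- `f` acts on `A` as the single cycle that lists `A` in the increasing order of the rank `r`. -/
structure IsIncreasingCycleOn (f : Equiv.Perm α) (r : α → β) (A : Set α) : Prop where
  injOn : Set.InjOn r A
  isCyclicSucc : ∀ i ∈ A, IsCyclicSucc r A i (f i)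

variable {r : α → β} {A B : Set α}

theorem IsCyclicSucc.rank_eq {i j j' : α} (h : IsCyclicSucc r B i j) (h' : IsCyclicSucc r B i j') :
    r j = r j' := by
  obtain ⟨hj, h⟩ := h
  obtain ⟨hj', h'⟩ := h'
  rcases h with ⟨_, h⟩ | h <;> rcases h' with ⟨_, h'⟩ | h' <;>
  · have := h j' hj'
    have := h' j hj
    grind

theorem IsCyclicSucc.anti {i j : α} (hBA : B ⊆ A) (h : IsCyclicSucc r A i j) (hj : j ∈ B) :
    IsCyclicSucc r B i j :=
  ⟨hj, h.2.imp (fun h => ⟨h.1, fun k hk => h.2 k (hBA hk)⟩) fun h k hk => h k (hBA hk)⟩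

theorem IsCyclicSucc.trans_of_notMem {i j k : α} (hBA : B ⊆ A) (hr : Set.InjOn r A)
    (hij : IsCyclicSucc r A i j) (hjB : j ∉ B) (hjk : IsCyclicSucc r B j k) :
    IsCyclicSucc r B i k := by
  obtain ⟨hjA, hij⟩ := hij
  obtain ⟨hkB, hjk⟩ := hjk
  have hne : ∀ l ∈ B, r l ≠ r j := fun l hl he => hjB (hr (hBA hl) hjA he ▸ hl)
  refine ⟨hkB, ?_⟩
  rcases hij with ⟨hij, hA⟩ | hA <;> rcases hjk with ⟨hjk, hB⟩ | hB
  · exact Or.inl ⟨hij.trans hjk, fun l hl => by grind⟩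
  · exact Or.inr fun l hl => by grind
  · exact Or.inr fun l hl => by grind
  · grind

variable {f : Equiv.Perm α}

theorem IsIncreasingCycleOn.congr {g : Equiv.Perm α} (h : IsIncreasingCycleOn f r A)
    (hfg : Set.EqOn f g A) : IsIncreasingCycleOn g r A :=
  ⟨h.injOn, fun i hi => hfg hi ▸ h.isCyclicSucc i hi⟩

theorem IsIncreasingCycleOn.congr_rank {γ : Type*} [LinearOrder γ] {r' : α → γ}
    (h : IsIncreasingCycleOn f r A) (hr : ∀ a ∈ A, ∀ b ∈ A, r' a < r' b ↔ r a < r b) :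
    IsIncreasingCycleOn f r' A := by
  have hle (a b) (ha : a ∈ A) (hb : b ∈ A) : r' a ≤ r' b ↔ r a ≤ r b := by
    simpa only [not_lt] using (hr b hb a ha).not
  refine ⟨fun a ha b hb hab => h.injOn ha hb ?_, fun i hi => ?_⟩
  · exact le_antisymm ((hle a b ha hb).1 hab.le) ((hle b a hb ha).1 hab.ge)
  · obtain ⟨hfi, hsucc⟩ := h.isCyclicSucc i hi
    refine ⟨hfi, hsucc.imp (fun hs => ⟨(hr _ hi _ hfi).2 hs.1, fun k hk => ?_⟩) fun hs k hk => ?_⟩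
    · rw [hle k i hk hi, hle _ k hfi hk]; exact hs.2 k hk
    · rw [hle k i hk hi, hle _ k hfi hk]; exact hs k hk

theorem isIncreasingCycleOn_formPerm [DecidableEq α] {l : List α} {r : α → ℕ} {s : ℕ}
    (hr : ∀ i (h : i < l.length), r l[i] = i + s) :
    IsIncreasingCycleOn l.formPerm r {a | a ∈ l} := by
  have hnodup : l.Nodup := by
    refine List.nodup_iff_injective_getElem.2 fun i j hij => Fin.ext ?_
    have hi := hr i i.2
    have hj := hr j j.2
    simp only at hij
    rw [hij] at hi
    omega
  refine ⟨fun a ha b hb hab => ?_, fun a ha => ?_⟩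
  · obtain ⟨i, hi, rfl⟩ := List.getElem_of_mem ha
    obtain ⟨j, hj, rfl⟩ := List.getElem_of_mem hb
    rw [hr, hr] at hab
    simp only [Nat.add_right_cancel hab]
  · obtain ⟨i, hi, rfl⟩ := List.getElem_of_mem ha
    rw [List.formPerm_apply_getElem _ hnodup]
    refine ⟨List.getElem_mem _, ?_⟩
    rcases Nat.lt_or_ge (i + 1) l.length with hlt | hge
    · simp only [Nat.mod_eq_of_lt hlt, hr]
      refine Or.inl ⟨by omega, fun k hk => ?_⟩
      obtain ⟨j, hj, rfl⟩ := List.getElem_of_mem hk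
      rw [hr]
      omega
    · simp only [show i + 1 = l.length by omega, Nat.mod_self, hr]
      refine Or.inr fun k hk => ?_
      obtain ⟨j, hj, rfl⟩ := List.getElem_of_mem hk
      rw [hr]
      omega

namespace IsIncreasingCycleOn

variable [Finite α]

theorem isCyclicSucc_induced (h : IsIncreasingCycleOn f r A) (hBA : B ⊆ A) {i c : α} (hi : i ∈ A)
    (hc : c ∈ B) (hic : f.SameCycle i c) : IsCyclicSucc r B i (induced f B i) := by
  refine induced_rec (P := fun i j => i ∈ A → IsCyclicSucc r B i j) ?_ ?_ hic hc hi
  · exact fun i hB hA => (h.isCyclicSucc i hA).anti hBA hB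
  · intro i hB ih hA
    have hsucc := h.isCyclicSucc i hA
    exact hsucc.trans_of_notMem hBA h.injOn hB (ih hsucc.1)

theorem sameCycle (h : IsIncreasingCycleOn f r A) {i j : α} (hi : i ∈ A) (hj : j ∈ A) :
    f.SameCycle i j := by
  have hlast : ∀ i ∈ A, ∃ m ∈ A, f.SameCycle i m ∧ ∀ k ∈ A, r k ≤ r m := by
    intro i hi
    obtain ⟨m, ⟨hmA, him⟩, hmax⟩ :=
      Set.exists_max_image (A ∩ orbitOf f i) r (Set.toFinite _) ⟨i, hi, .refl f i⟩
    refine ⟨m, hmA, him, ?_⟩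
    obtain ⟨hfm, ⟨hlt, -⟩ | hlast⟩ := h.isCyclicSucc m hmA
    · exact absurd (hmax _ ⟨hfm, sameCycle_apply_right.2 him⟩) hlt.not_ge
    · exact fun k hk => (hlast k hk).2
  obtain ⟨m, hm, him, hmax⟩ := hlast i hi
  obtain ⟨m', hm', hjm', hmax'⟩ := hlast j hj
  obtain rfl := h.injOn hm hm' (le_antisymm (hmax' _ hm) (hmax _ hm'))
  exact him.trans hjm'.symm

theorem induced_eq_of_isCyclicSucc (h : IsIncreasingCycleOn f r A) (hBA : B ⊆ A) {i j : α}
    (hi : i ∈ A) (hij : IsCyclicSucc r B i j) : induced f B i = j := by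
  have hsucc := h.isCyclicSucc_induced hBA hi hij.1 (h.sameCycle hi (hBA hij.1))
  exact h.injOn (hBA hsucc.1) (hBA hij.1) (hsucc.rank_eq hij)

theorem mapsCyc3_of_lt (h : IsIncreasingCycleOn f r A) {a b c : α} (hA : {a, b, c} ⊆ A)
    (hab : r a < r b) (hbc : r b < r c) : MapsCyc3 f {a, b, c} a b c := by
  obtain ⟨ha, hb, hc⟩ : a ∈ A ∧ b ∈ A ∧ c ∈ A := by simpa [Set.insert_subset_iff] using hA
  refine ⟨h.induced_eq_of_isCyclicSucc hA ha ?_, h.induced_eq_of_isCyclicSucc hA hb ?_,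
    h.induced_eq_of_isCyclicSucc hA hc ?_⟩ <;>
  · simp only [IsCyclicSucc, Set.mem_insert_iff, Set.mem_singleton_iff, forall_eq_or_imp,
      forall_eq]
    grind

theorem lt_of_mapsCyc3 (h : IsIncreasingCycleOn f r A) {a b c : α} (hA : {a, b, c} ⊆ A)
    (hab : a ≠ b) (hbc : b ≠ c) (hca : c ≠ a) (hcyc : MapsCyc3 f {a, b, c} a b c) :
    (r a < r b ∧ r b < r c) ∨ (r b < r c ∧ r c < r a) ∨ (r c < r a ∧ r a < r b) := by
  obtain ⟨ha, hb, hc⟩ : a ∈ A ∧ b ∈ A ∧ c ∈ A := by simpa [Set.insert_subset_iff] using hA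
  have hsucc (i) (hi : i ∈ A) := h.isCyclicSucc_induced hA hi (.inl rfl) (h.sameCycle hi ha)
  have h1 := hsucc a ha
  have h2 := hsucc b hb
  rw [hcyc.1] at h1
  rw [hcyc.2.1] at h2
  have := h.injOn.ne ha hb hab
  have := h.injOn.ne hb hc hbc
  have := h.injOn.ne hc ha hca
  simp only [IsCyclicSucc, Set.mem_insert_iff, Set.mem_singleton_iff, forall_eq_or_imp,
    forall_eq] at h1 h2
  grind

theorem mapsCyc4_of_lt (h : IsIncreasingCycleOn f r A) {a b c d : α} (hA : {a, b, c, d} ⊆ A)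
    (hab : r a < r b) (hbc : r b < r c) (hcd : r c < r d) :
    MapsCyc4 f {a, b, c, d} a b c d := by
  obtain ⟨ha, hb, hc, hd⟩ : a ∈ A ∧ b ∈ A ∧ c ∈ A ∧ d ∈ A := by
    simpa [Set.insert_subset_iff] using hA
  refine ⟨h.induced_eq_of_isCyclicSucc hA ha ?_, h.induced_eq_of_isCyclicSucc hA hb ?_,
    h.induced_eq_of_isCyclicSucc hA hc ?_, h.induced_eq_of_isCyclicSucc hA hd ?_⟩ <;>
  · simp only [IsCyclicSucc, Set.mem_insert_iff, Set.mem_singleton_iff, forall_eq_or_imp,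
      forall_eq]
    grind

theorem lt_of_mapsCyc4 (h : IsIncreasingCycleOn f r A) {a b c d : α} (hA : {a, b, c, d} ⊆ A)
    (hne : [a, b, c, d].Nodup) (hcyc : MapsCyc4 f {a, b, c, d} a b c d) :
    (r a < r b ∧ r b < r c ∧ r c < r d) ∨ (r b < r c ∧ r c < r d ∧ r d < r a) ∨
    (r c < r d ∧ r d < r a ∧ r a < r b) ∨ (r d < r a ∧ r a < r b ∧ r b < r c) := by
  obtain ⟨ha, hb, hc, hd⟩ : a ∈ A ∧ b ∈ A ∧ c ∈ A ∧ d ∈ A := by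
    simpa [Set.insert_subset_iff] using hA
  have hsucc (i) (hi : i ∈ A) := h.isCyclicSucc_induced hA hi (.inl rfl) (h.sameCycle hi ha)
  have h1 := hsucc a ha
  have h2 := hsucc b hb
  have h3 := hsucc c hc
  have h4 := hsucc d hd
  rw [hcyc.1] at h1
  rw [hcyc.2.1] at h2
  rw [hcyc.2.2.1] at h3
  rw [hcyc.2.2.2] at h4
  simp only [List.nodup_cons, List.mem_cons, List.not_mem_nil, or_false, not_or] at hne
  have := h.injOn.ne ha hb hne.1.1
  have := h.injOn.ne ha hc hne.1.2.1
  have := h.injOn.ne ha hd hne.1.2.2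
  have := h.injOn.ne hb hc hne.2.1.1
  have := h.injOn.ne hb hd hne.2.1.2
  have := h.injOn.ne hc hd hne.2.2.1
  simp only [IsCyclicSucc, Set.mem_insert_iff, Set.mem_singleton_iff, forall_eq_or_imp,
    forall_eq] at h1 h2 h3 h4
  clear hsucc hcyc hA
  grind

theorem mem_of_sameCycle (h : IsIncreasingCycleOn f r A) {i j : α} (hij : f.SameCycle i j)
    (hi : i ∈ A) : j ∈ A := by
  obtain ⟨k, -, -, rfl⟩ := hij.exists_pow_eq''
  have hmaps : Set.MapsTo f A A := fun i hi => (h.isCyclicSucc i hi).1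
  exact iterate_eq_pow f k ▸ hmaps.iterate k hi

theorem subset_of_mapsCyc4 (h : IsIncreasingCycleOn f r A) {a b c d : α}
    (hcyc : MapsCyc4 f {a, b, c, d} a b c d) (ha : a ∈ A) : {a, b, c, d} ⊆ A := by
  have hnext {i j : α} (hij : induced f {a, b, c, d} i = j) (hi : i ∈ ({a, b, c, d} : Set α))
      (hiA : i ∈ A) : j ∈ A :=
    h.mem_of_sameCycle (hij ▸ sameCycle_induced (.refl f i) hi) hiA
  have hb := hnext hcyc.1 (by simp) ha
  have hc := hnext hcyc.2.1 (by simp) hb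
  have hd := hnext hcyc.2.2.1 (by simp) hc
  simp [Set.insert_subset_iff, ha, hb, hc, hd]

theorem eq_induced_iff (h : IsIncreasingCycleOn f r A) (hBA : B ⊆ A) {i j : α} (hi : i ∈ B) :
    j = induced f B i ↔ IsCyclicSucc r B i j := by
  refine ⟨?_, fun hij => (h.induced_eq_of_isCyclicSucc hBA (hBA hi) hij).symm⟩
  rintro rfl
  exact h.isCyclicSucc_induced hBA (hBA hi) hi (.refl f i)

end IsIncreasingCycleOn

end CyclicSucc

section Patterns

variable {α β : Type*} [LinearOrder β]

/-- No two orbits of `f` cross inside `A`, where `A` is ordered by the rank `r`. -/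
def NonCrossingOn (f : Equiv.Perm α) (r : α → β) (A : Set α) : Prop :=
  ∀ a ∈ A, ∀ b ∈ A, ∀ c ∈ A, ∀ d ∈ A, r a < r b → r b < r c → r c < r d →
    f.SameCycle a c → f.SameCycle b d → f.SameCycle a b

theorem NonCrossingOn.mono {f : Equiv.Perm α} {r : α → β} {A B : Set α} (h : NonCrossingOn f r A)
    (hBA : B ⊆ A) : NonCrossingOn f r B :=
  fun a ha b hb c hc d hd => h a (hBA ha) b (hBA hb) c (hBA hc) d (hBA hd)

variable [Finite α] {f g : Equiv.Perm α} {r : α → β} {A B S : Set α}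

theorem mapsSwap_iff {a c : α} (ha : a ∈ S) (hc : c ∈ S) (hac : a ≠ c) :
    MapsSwap f S a c ↔ ∀ s ∈ S, f.SameCycle a s ↔ s = a ∨ s = c := by
  constructor
  · rintro ⟨hfa, hfc⟩ s hs
    have hmaps : Set.MapsTo (induced f S) {a, c} {a, c} := by
      rintro b (rfl | rfl)
      exacts [.inr hfa, .inl hfc]
    refine ⟨mem_of_mapsTo_induced hmaps (.inl rfl) hs, ?_⟩
    rintro (rfl | rfl)
    exacts [.refl f _, hfa ▸ sameCycle_induced (.refl f a) ha]
  · intro h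
    have hac' : f.SameCycle a c := (h c hc).2 (.inr rfl)
    have hmem {b : α} (hb : b ∈ S) (hab : f.SameCycle a b) :
        induced f S b = a ∨ induced f S b = c :=
      (h _ (induced_mem (.refl f b) hb)).1 (hab.trans (sameCycle_induced (.refl f b) hb))
    have hfix {b b' : α} (hb' : b' ∈ S) (hbb' : f.SameCycle b b') (hb : induced f S b = b) :
        b' = b :=
      mem_of_mapsTo_induced (T := {b}) (by rintro _ rfl; exact hb) rfl hb' hbb'
    exact ⟨(hmem ha (.refl f a)).resolve_left fun hfa => hac (hfix hc hac' hfa).symm,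
      (hmem hc hac').resolve_right fun hfc => hac (hfix ha hac'.symm hfc)⟩

theorem mapsCyc3_apply {i k : α} (hS : ∀ s, s ∈ S ↔ s = i ∨ s = f i ∨ s = k) (hi : f i ≠ i)
    (hki : k ≠ i) (hkf : k ≠ f i) (hik : f.SameCycle i k) : MapsCyc3 f S i (f i) k := by
  have hiS : i ∈ S := (hS i).2 (.inl rfl)
  have hfiS : f i ∈ S := (hS _).2 (.inr (.inl rfl))
  have hkS : k ∈ S := (hS k).2 (.inr (.inr rfl))
  have hfik : f.SameCycle (f i) k := sameCycle_apply_left.2 hik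
  have hfi : induced f S i = f i := induced_eq_apply hfiS
  have hffi : induced f S (f i) = k := by
    rcases (hS _).1 (induced_mem (.refl f (f i)) hfiS) with h | h | h
    · have hT : Set.MapsTo (induced f S) {i, f i} {i, f i} := by
        rintro _ (rfl | rfl)
        exacts [.inr hfi, .inl h]
      exact absurd (mem_of_mapsTo_induced hT (.inl rfl) hkS hik) (by simp [hki, hkf])
    · have hT : Set.MapsTo (induced f S) {f i} {f i} := by rintro _ rfl; exact h
      exact absurd (mem_of_mapsTo_induced hT rfl hkS hfik) hkf
    · exact h
  have hk : induced f S k = i := by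
    rcases (hS _).1 (induced_mem (.refl f k) hkS) with h | h | h
    · exact h
    · have hT : Set.MapsTo (induced f S) {f i, k} {f i, k} := by
        rintro _ (rfl | rfl)
        exacts [.inr hffi, .inl h]
      exact absurd (mem_of_mapsTo_induced hT (.inl rfl) hiS (hfik.trans hik.symm))
        (by simp [hki.symm, hi.symm])
    · have hT : Set.MapsTo (induced f S) {k} {k} := by rintro _ rfl; exact h
      exact absurd (mem_of_mapsTo_induced hT rfl hiS hik.symm) hki.symm
  exact ⟨hfi, hffi, hk⟩

theorem isIncreasingCycleOn_orbitOf_iff_forall_lt {i : α} (hr : Set.InjOn r (orbitOf f i)) :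
    IsIncreasingCycleOn f r (orbitOf f i) ↔
      ∀ a ∈ orbitOf f i, ∀ b ∈ orbitOf f i, ∀ c ∈ orbitOf f i, r a < r b → r b < r c →
        ¬ MapsCyc3 f {a, b, c} a c b := by
  constructor
  · intro h a ha b hb c hc hab hbc hcyc
    have hcyc' := h.mapsCyc3_of_lt (by simp [Set.insert_subset_iff, ha, hb, hc]) hab hbc
    exact hbc.ne (congrArg r (hcyc'.1.symm.trans hcyc.1))
  · refine fun h => ⟨hr, fun j hj => ?_⟩
    have hfj : f j ∈ orbitOf f i := sameCycle_apply_right.2 hj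
    by_contra hsucc
    have hcyc {S : Set α} {k : α} (hk : k ∈ orbitOf f i)
        (hS : ∀ s, s ∈ S ↔ s = j ∨ s = f j ∨ s = k) (hne : r (f j) ≠ r j)
        (hkj : r k ≠ r j) (hkf : r k ≠ r (f j)) : MapsCyc3 f S j (f j) k :=
      mapsCyc3_apply hS (ne_of_apply_ne r hne) (ne_of_apply_ne r hkj) (ne_of_apply_ne r hkf)
        (hj.symm.trans hk)
    simp only [IsCyclicSucc, hfj, true_and, not_or, not_and, not_forall, not_le] at hsucc
    obtain ⟨hgap, k, hk, hlast⟩ := hsucc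
    rcases lt_trichotomy (r j) (r (f j)) with hlt | heq | hgt
    · obtain ⟨k, hk, hjk, hkf⟩ := hgap hlt
      exact h j hj k hk (f j) hfj hjk hkf (hcyc hk (by grind) hlt.ne' hjk.ne' hkf.ne)
    · have hfix : f j = j := (hr hj hfj heq).symm
      obtain rfl : j = k := (hj.symm.trans hk).eq_of_left hfix
      exact absurd (hlast heq.ge) (lt_irrefl _)
    · rcases lt_or_ge (r k) (r (f j)) with hkf | hfk
      · obtain ⟨h1, h2, h3⟩ := hcyc (S := {k, f j, j}) hk (by grind) hgt.ne (by grind) hkf.ne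
        exact h k hk (f j) hfj j hj hkf hgt ⟨h3, h1, h2⟩
      · have hjk := hlast hfk
        obtain ⟨h1, h2, h3⟩ := hcyc (S := {f j, j, k}) hk (by grind) hgt.ne hjk.ne' (by grind)
        exact h (f j) hfj j hj k hk hgt hjk ⟨h2, h3, h1⟩

theorem IsIncreasingCycleOn.not_nonCrossingOn_iff (hg : IsIncreasingCycleOn g r A) (hBA : B ⊆ A) :
    ¬ NonCrossingOn f r B ↔ ∃ a b c d, [a, b, c, d].Nodup ∧ {a, b, c, d} ⊆ B ∧
      MapsCyc4 g {a, b, c, d} a b c d ∧ f.SameCycle a c ∧ f.SameCycle b d ∧ ¬ f.SameCycle a b := by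
  constructor
  · intro h
    simp only [NonCrossingOn, not_forall] at h
    obtain ⟨a, ha, b, hb, c, hc, d, hd, hab, hbc, hcd, hac, hbd, h⟩ := h
    have hB : {a, b, c, d} ⊆ B := by simp [Set.insert_subset_iff, ha, hb, hc, hd]
    refine ⟨a, b, c, d, ?_, hB, hg.mapsCyc4_of_lt (hB.trans hBA) hab hbc hcd, hac, hbd, h⟩
    have hlt : ([a, b, c, d].map r).SortedLT := by
      rw [List.sortedLT_iff_pairwise]
      grind
    exact .of_map r hlt.nodup
  · rintro ⟨a, b, c, d, hne, hB, hcyc, hac, hbd, hab⟩ h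
    have hlt := hg.lt_of_mapsCyc4 (hB.trans hBA) hne hcyc
    obtain ⟨ha, hb, hc, hd⟩ : a ∈ B ∧ b ∈ B ∧ c ∈ B ∧ d ∈ B := by
      simpa [Set.insert_subset_iff] using hB
    apply hab
    rcases hlt with ⟨h1, h2, h3⟩ | ⟨h1, h2, h3⟩ | ⟨h1, h2, h3⟩ | ⟨h1, h2, h3⟩
    · exact h a ha b hb c hc d hd h1 h2 h3 hac hbd
    · exact (hac.trans (h b hb c hc d hd a ha h1 h2 h3 hbd hac.symm).symm)
    · exact hac.trans ((h c hc d hd a ha b hb h1 h2 h3 hac.symm hbd.symm).trans hbd.symm)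
    · exact (h d hd a ha b hb c hc h1 h2 h3 hbd.symm hac).symm.trans hbd.symm

theorem IsIncreasingCycleOn.isIncreasingCycleOn_orbitOf_iff (hg : IsIncreasingCycleOn g r A) {i : α}
    (hiA : orbitOf f i ⊆ A) :
    IsIncreasingCycleOn f r (orbitOf f i) ↔ ∀ a b c, {a, b, c} ⊆ orbitOf f i → [a, b, c].Nodup →
      MapsCyc3 g {a, b, c} a b c → ¬ MapsCyc3 f {a, b, c} a c b := by
  rw [isIncreasingCycleOn_orbitOf_iff_forall_lt (hg.injOn.mono hiA)]
  constructor
  · intro h a b c hC hne hcyc hcyc'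
    obtain ⟨ha, hb, hc⟩ : a ∈ orbitOf f i ∧ b ∈ orbitOf f i ∧ c ∈ orbitOf f i := by
      simpa [Set.insert_subset_iff] using hC
    simp only [List.nodup_cons, List.mem_cons, List.not_mem_nil, or_false, not_or] at hne
    have hbca : ({b, c, a} : Set α) = {a, b, c} := by grind
    have hcab : ({c, a, b} : Set α) = {a, b, c} := by grind
    obtain ⟨h1, h2, h3⟩ := hcyc'
    rcases hg.lt_of_mapsCyc3 (hC.trans hiA) hne.1.1 hne.2.1 (Ne.symm hne.1.2) hcyc with
      ⟨hlt, hlt'⟩ | ⟨hlt, hlt'⟩ | ⟨hlt, hlt'⟩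
    · exact h a ha b hb c hc hlt hlt' ⟨h1, h2, h3⟩
    · exact h b hb c hc a ha hlt hlt' (hbca ▸ ⟨h3, h1, h2⟩)
    · exact h c hc a ha b hb hlt hlt' (hcab ▸ ⟨h2, h3, h1⟩)
  · intro h a ha b hb c hc hab hbc
    have hC : {a, b, c} ⊆ orbitOf f i := by simp [Set.insert_subset_iff, ha, hb, hc]
    have hlt : ([a, b, c].map r).SortedLT := by
      rw [List.sortedLT_iff_pairwise]
      grind
    exact h a b c hC (.of_map r hlt.nodup) (hg.mapsCyc3_of_lt (hC.trans hiA) hab hbc)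

theorem mapsSwap2_quadruple_iff {a b c d : α}
    (hne : [a, b, c, d].Nodup) : MapsSwap2 f {a, b, c, d} a b c d ↔
      f.SameCycle a c ∧ f.SameCycle b d ∧ ¬ f.SameCycle a b := by
  simp only [List.nodup_cons, List.mem_cons, List.not_mem_nil, or_false, not_or] at hne
  have hac := mapsSwap_iff (f := f) (S := {a, b, c, d}) (a := a) (c := c) (by simp) (by simp)
    hne.1.2.1
  have hbd := mapsSwap_iff (f := f) (S := {a, b, c, d}) (a := b) (c := d) (by simp) (by simp)
    hne.2.1.2
  simp only [Set.mem_insert_iff, Set.mem_singleton_iff, forall_eq_or_imp, forall_eq] at hac hbd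
  rw [MapsSwap2, ← and_assoc, ← MapsSwap, hac, ← MapsSwap, hbd]
  have hsymm (u v) : f.SameCycle u v ↔ f.SameCycle v u := sameCycle_comm
  have htrans (u v w) : f.SameCycle u v → f.SameCycle v w → f.SameCycle u w := .trans
  have hrefl := SameCycle.refl f
  grind

theorem mapsSwap2_and_mapsSwap_iff {a b c d x y : α}
    (hne : [a, b, c, d, x, y].Nodup) :
    MapsSwap2 f {a, b, c, d, x, y} a b c d ∧ MapsSwap f {a, b, c, d, x, y} x y ↔
      (f.SameCycle a c ∧ f.SameCycle b d ∧ ¬ f.SameCycle a b) ∧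
        f.SameCycle x y ∧ ¬ f.SameCycle x a ∧ ¬ f.SameCycle x b := by
  simp only [List.nodup_cons, List.mem_cons, List.not_mem_nil, or_false, not_or] at hne
  have hac := mapsSwap_iff (f := f) (S := {a, b, c, d, x, y}) (a := a) (c := c) (by simp) (by simp)
    hne.1.2.1
  have hbd := mapsSwap_iff (f := f) (S := {a, b, c, d, x, y}) (a := b) (c := d) (by simp) (by simp)
    hne.2.1.2.1
  have hxy := mapsSwap_iff (f := f) (S := {a, b, c, d, x, y}) (a := x) (c := y) (by simp) (by simp)
    hne.2.2.2.2.1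
  simp only [Set.mem_insert_iff, Set.mem_singleton_iff, forall_eq_or_imp, forall_eq] at hac hbd hxy
  rw [MapsSwap2, ← and_assoc, ← MapsSwap, hac, ← MapsSwap, hbd, hxy]
  have hsymm (u v) : f.SameCycle u v ↔ f.SameCycle v u := sameCycle_comm
  have htrans (u v w) : f.SameCycle u v → f.SameCycle v w → f.SameCycle u w := .trans
  have hrefl := SameCycle.refl f
  grind

theorem mapsSwap_quintuple_iff {a b c x y : α}
    (hne : [a, b, c, x, y].Nodup) : MapsSwap f {a, b, c, x, y} x y ↔
      f.SameCycle x y ∧ ¬ f.SameCycle x a ∧ ¬ f.SameCycle x b ∧ ¬ f.SameCycle x c := by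
  simp only [List.nodup_cons, List.mem_cons, List.not_mem_nil, or_false, not_or] at hne
  have hxy := mapsSwap_iff (f := f) (S := {a, b, c, x, y}) (a := x) (c := y) (by simp) (by simp)
    hne.2.2.2.1
  simp only [Set.mem_insert_iff, Set.mem_singleton_iff, forall_eq_or_imp, forall_eq] at hxy
  rw [hxy]
  have hrefl := SameCycle.refl f
  grind

theorem mapsCyc3_quintuple_iff {a b c x y : α} (hne : [a, b, c, x, y].Nodup)
    (hxy : f.SameCycle x y) (ha : ¬ f.SameCycle x a) (hb : ¬ f.SameCycle x b)
    (hc : ¬ f.SameCycle x c) :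
    MapsCyc3 f {a, b, c, x, y} a c b ↔ MapsCyc3 f {a, b, c} a c b := by
  have hinter : ({a, b, c, x, y} : Set α) ∩ {u | u ≠ x ∧ u ≠ y} = {a, b, c} := by
    simp only [List.nodup_cons, List.mem_cons, List.not_mem_nil, or_false, not_or] at hne
    ext u
    simp only [Set.mem_inter_iff, Set.mem_insert_iff, Set.mem_singleton_iff, Set.mem_ofPred_eq]
    grind
  have heq {u : α} (hu : u ∈ ({a, b, c, x, y} : Set α)) (hxu : ¬ f.SameCycle x u) :
      induced f {a, b, c, x, y} u = induced f {a, b, c} u := by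
    rw [← hinter]
    exact (induced_inter_of_orbit_subset (orbitOf_subset_of_not_sameCycle hxy hxu)
      (.refl f u) hu).symm
  rw [MapsCyc3, MapsCyc3, heq (by simp) ha, heq (by simp) hb, heq (by simp) hc]

end Patterns

section ForwardCycles

variable {p q : ℕ}

theorem mem_extSet {i : Fin (p + q)} : i ∈ extSet p q ↔ (i : ℕ) < p := Iff.rfl

theorem mem_intSet {i : Fin (p + q)} : i ∈ intSet p q ↔ p ≤ (i : ℕ) := Iff.rfl

theorem notMem_extSet {i : Fin (p + q)} : i ∉ extSet p q ↔ i ∈ intSet p q :=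
  mem_extSet.not.trans not_lt

theorem notMem_intSet {i : Fin (p + q)} : i ∉ intSet p q ↔ i ∈ extSet p q :=
  mem_intSet.not.trans not_le

theorem mem_take_finRange {i : Fin (p + q)} :
    i ∈ (List.finRange (p + q)).take p ↔ i ∈ extSet p q := by
  simp only [List.mem_take_iff_getElem, mem_extSet, List.getElem_finRange]
  constructor
  · rintro ⟨j, h, rfl⟩
    simp only [List.length_finRange] at h
    simp only [Fin.val_cast]
    omega
  · exact fun h => ⟨i, by simp only [List.length_finRange]; omega, Fin.ext rfl⟩

theorem mem_drop_finRange {i : Fin (p + q)} :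
    i ∈ (List.finRange (p + q)).drop p ↔ i ∈ intSet p q := by
  simp only [List.mem_drop_iff_getElem, mem_intSet, List.getElem_finRange]
  constructor
  · rintro ⟨j, h, rfl⟩
    simp
  · exact fun h => ⟨i - p, by simp only [List.length_finRange]; omega,
      Fin.ext (Nat.add_sub_cancel' h)⟩

theorem isIncreasingCycleOn_gammaExt :
    IsIncreasingCycleOn (gammaExt p q) Fin.val (extSet p q) := by
  have h := isIncreasingCycleOn_formPerm (l := (List.finRange (p + q)).take p) (r := Fin.val)
    (s := 0) (by simp)
  rwa [show {a | a ∈ (List.finRange (p + q)).take p} = extSet p q from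
    Set.ext fun _ => mem_take_finRange] at h

theorem isIncreasingCycleOn_gammaInt :
    IsIncreasingCycleOn (gammaInt p q) Fin.val (intSet p q) := by
  have h := isIncreasingCycleOn_formPerm (l := (List.finRange (p + q)).drop p) (r := Fin.val)
    (s := p) (by simp [add_comm])
  rwa [show {a | a ∈ (List.finRange (p + q)).drop p} = intSet p q from
    Set.ext fun _ => mem_drop_finRange] at h

theorem gammaExt_apply_of_mem_intSet {i : Fin (p + q)} (hi : i ∈ intSet p q) :
    gammaExt p q i = i :=
  List.formPerm_apply_of_notMem (mem_take_finRange.not.2 (notMem_extSet.2 hi))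

theorem gammaInt_apply_of_mem_extSet {i : Fin (p + q)} (hi : i ∈ extSet p q) :
    gammaInt p q i = i :=
  List.formPerm_apply_of_notMem (mem_drop_finRange.not.2 (notMem_intSet.2 hi))

theorem gammaExt_pow_apply {x : Fin (p + q)} (hx : x ∈ extSet p q) (k : ℕ) :
    ((gammaExt p q ^ k) x : ℕ) = (x + k) % p := by
  have hl : x < ((List.finRange (p + q)).take p).length := by
    simpa using mem_extSet.1 hx
  have h := List.formPerm_pow_apply_getElem ((List.finRange (p + q)).take p)
    ((List.nodup_finRange _).sublist (List.take_sublist _ _)) k x hl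
  have := congrArg Fin.val h
  simpa [gammaExt] using this

theorem gammaInt_pow_apply {y : Fin (p + q)} (hy : y ∈ intSet p q) (k : ℕ) :
    ((gammaInt p q ^ k) y : ℕ) = p + (y - p + k) % q := by
  have hy' : p ≤ (y : ℕ) := hy
  have hl : y - p < ((List.finRange (p + q)).drop p).length := by
    rw [List.length_drop, List.length_finRange]
    omega
  have h := List.formPerm_pow_apply_getElem ((List.finRange (p + q)).drop p)
    ((List.nodup_finRange _).sublist (List.drop_sublist _ _)) k (y - p) hl
  have := congrArg Fin.val h
  simpa [gammaInt, hy'] using this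

theorem isIncreasingCycleOn_finRotate (n : ℕ) :
    IsIncreasingCycleOn (finRotate n) Fin.val Set.univ := by
  refine ⟨Fin.val_injective.injOn, fun i _ => ?_⟩
  obtain _ | n := n
  · exact i.elim0
  · rcases eq_or_ne i (Fin.last n) with rfl | hi
    · rw [finRotate_last]
      exact ⟨trivial, .inr fun k _ => ⟨Nat.zero_le _, Fin.le_last k⟩⟩
    · refine ⟨trivial, .inl ?_⟩
      rw [coe_finRotate_of_ne_last hi]
      exact ⟨by omega, fun k _ => by omega⟩

/-- The position of `u`, counted from `0`, in the cycle `λ_{x,y}` listed as in its definition: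
forwards from `x` along the external circle, then forwards from `y` along the internal one. -/
def lamRank (p q : ℕ) (x y u : Fin (p + q)) : ℕ :=
  if (u : ℕ) < p then if (x : ℕ) < u then (u : ℕ) - x - 1 else (u : ℕ) + p - x - 1
  else p - 1 + if (y : ℕ) < u then (u : ℕ) - y - 1 else (u : ℕ) + q - y - 1

theorem gammaExt_pow_eq_iff {x y u : Fin (p + q)} (hx : x ∈ extSet p q) {k : ℕ} (hk : k < p - 1) :
    (gammaExt p q ^ (k + 1)) x = u ↔ u ∈ extSet p q ∧ u ≠ x ∧ lamRank p q x y u = k := by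
  rw [Fin.ext_iff, gammaExt_pow_apply hx, ne_eq, Fin.ext_iff, lamRank]
  rw [mem_extSet] at *
  rw [Nat.add_mod_eq_ite, Nat.mod_eq_of_lt hx, Nat.mod_eq_of_lt (by omega)]
  split_ifs <;> omega

theorem gammaInt_pow_eq_iff {x y u : Fin (p + q)} (hy : y ∈ intSet p q) {k : ℕ} (hk : k < q - 1) :
    (gammaInt p q ^ (k + 1)) y = u ↔
      u ∈ intSet p q ∧ u ≠ y ∧ lamRank p q x y u = p - 1 + k := by
  rw [Fin.ext_iff, gammaInt_pow_apply hy, ne_eq, Fin.ext_iff, lamRank]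
  rw [mem_intSet] at *
  rw [Nat.add_mod_eq_ite, Nat.mod_eq_of_lt (by omega : y - p < q), Nat.mod_eq_of_lt (by omega)]
  split_ifs <;> omega

theorem exists_gammaExt_pow_eq_iff {x u : Fin (p + q)} (hx : x ∈ extSet p q) :
    (∃ k < p - 1, (gammaExt p q ^ (k + 1)) x = u) ↔ u ∈ extSet p q ∧ u ≠ x := by
  constructor
  · rintro ⟨k, hk, h⟩
    have hu := (gammaExt_pow_eq_iff (y := x) hx hk).1 h
    exact ⟨hu.1, hu.2.1⟩
  · rintro ⟨hu, hux⟩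
    have hk : lamRank p q x x u < p - 1 := by
      rw [lamRank]
      rw [mem_extSet] at *
      rw [ne_eq, Fin.ext_iff] at hux
      split_ifs; all_goals omega
    exact ⟨_, hk, (gammaExt_pow_eq_iff (y := x) hx hk).2 ⟨hu, hux, rfl⟩⟩

theorem exists_gammaInt_pow_eq_iff {y u : Fin (p + q)} (hy : y ∈ intSet p q) :
    (∃ k < q - 1, (gammaInt p q ^ (k + 1)) y = u) ↔ u ∈ intSet p q ∧ u ≠ y := by
  constructor
  · rintro ⟨k, hk, h⟩
    have hu := (gammaInt_pow_eq_iff (x := y) hy hk).1 h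
    exact ⟨hu.1, hu.2.1⟩
  · rintro ⟨hu, huy⟩
    obtain ⟨k, hk, hku⟩ : ∃ k < q - 1, lamRank p q y y u = p - 1 + k := by
      refine ⟨_, ?_, by rw [lamRank, if_neg (not_lt.2 hu)]⟩
      rw [mem_intSet] at *
      rw [ne_eq, Fin.ext_iff] at huy
      split_ifs <;> omega
    exact ⟨k, hk, (gammaInt_pow_eq_iff (x := y) hy hk).2 ⟨hu, huy, hku⟩⟩

theorem isIncreasingCycleOn_lamPerm {x y : Fin (p + q)} (hx : x ∈ extSet p q)
    (hy : y ∈ intSet p q) :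
    IsIncreasingCycleOn (lamPerm p q x y) (lamRank p q x y) {u | u ≠ x ∧ u ≠ y} := by
  have h := isIncreasingCycleOn_formPerm (r := lamRank p q x y) (s := 0)
    (l := ((List.range (p - 1)).map fun k => (gammaExt p q ^ (k + 1)) x) ++
      ((List.range (q - 1)).map fun k => (gammaInt p q ^ (k + 1)) y)) (by
        intro i hi
        rw [List.getElem_append]
        split_ifs with hip
        · simp only [List.length_map, List.length_range] at hip
          simp only [List.getElem_map, List.getElem_range, add_zero]
          exact ((gammaExt_pow_eq_iff hx hip).1 rfl).2.2
        · simp only [List.length_append, List.length_map, List.length_range] at hip hi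
          simp only [List.getElem_map, List.getElem_range, List.length_map, List.length_range,
            add_zero]
          rw [((gammaInt_pow_eq_iff hy (by omega)).1 rfl).2.2]
          omega)
  rwa [show {u | u ≠ x ∧ u ≠ y} = _ from Set.ext fun u => ?_]
  simp only [Set.mem_ofPred_eq, List.mem_append, List.mem_map, List.mem_range,
    exists_gammaExt_pow_eq_iff hx, exists_gammaInt_pow_eq_iff hy]
  simp only [mem_extSet, mem_intSet, ne_eq, Fin.ext_iff] at *
  omega

theorem isIncreasingCycleOn_gammaAnn_extSet :
    IsIncreasingCycleOn (gammaAnn p q) Fin.val (extSet p q) :=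
  isIncreasingCycleOn_gammaExt.congr fun _ hi =>
    (congrArg (gammaExt p q) (gammaInt_apply_of_mem_extSet hi)).symm

theorem isIncreasingCycleOn_gammaAnn_intSet :
    IsIncreasingCycleOn (gammaAnn p q) Fin.val (intSet p q) :=
  isIncreasingCycleOn_gammaInt.congr fun i hi =>
    (gammaExt_apply_of_mem_intSet (isIncreasingCycleOn_gammaInt.isCyclicSucc i hi).1).symm

end ForwardCycles

section AnnularPatterns

variable {p q : ℕ} {τ : Equiv.Perm (Fin (p + q))}

theorem not_ac1_iff :
    ¬ AC1 p q τ ↔ NonCrossingOn τ Fin.val (extSet p q) ∧ NonCrossingOn τ Fin.val (intSet p q) := by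
  rw [not_iff_comm, not_and_or,
    isIncreasingCycleOn_gammaAnn_extSet.not_nonCrossingOn_iff subset_rfl,
    isIncreasingCycleOn_gammaAnn_intSet.not_nonCrossingOn_iff subset_rfl]
  constructor
  · rintro (⟨a, b, c, d, hne, -, hcyc, h⟩ | ⟨a, b, c, d, hne, -, hcyc, h⟩)
    all_goals exact ⟨a, b, c, d, hne, hcyc, (mapsSwap2_quadruple_iff hne).2 h⟩
  · rintro ⟨a, b, c, d, hne, hcyc, hswap⟩
    have h := (mapsSwap2_quadruple_iff hne).1 hswap
    by_cases ha : a ∈ extSet p q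
    · exact .inl ⟨a, b, c, d, hne,
        isIncreasingCycleOn_gammaAnn_extSet.subset_of_mapsCyc4 hcyc ha, hcyc, h⟩
    · exact .inr ⟨a, b, c, d, hne, isIncreasingCycleOn_gammaAnn_intSet.subset_of_mapsCyc4 hcyc
        (notMem_extSet.1 ha), hcyc, h⟩

theorem not_ac2_iff : ¬ AC2 p q τ ↔ ∀ x ∈ extSet p q, ∀ y ∈ intSet p q, τ.SameCycle x y →
    ∀ a, ¬ τ.SameCycle x a → IsIncreasingCycleOn τ (lamRank p q x y) (orbitOf τ a) := by
  constructor
  · intro h x hx y hy hxy i hxi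
    have hsub := orbitOf_subset_of_not_sameCycle hxy hxi
    rw [(isIncreasingCycleOn_lamPerm hx hy).isIncreasingCycleOn_orbitOf_iff hsub]
    intro a b c hC hne hcyc hcyc'
    have hC' : {a, b, c} ⊆ {u | u ≠ x ∧ u ≠ y} := hC.trans hsub
    simp only [Set.insert_subset_iff, Set.singleton_subset_iff] at hC hC'
    have hnot {u : Fin (p + q)} (hu : u ∈ orbitOf τ i) : ¬ τ.SameCycle x u :=
      fun hxu => hxi (hxu.trans (SameCycle.symm hu))
    have hne' : [a, b, c, x, y].Nodup := by
      have hxy' : x ≠ y := (lt_of_lt_of_le hx hy).ne ∘ congrArg Fin.val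
      simp only [List.nodup_cons, List.mem_cons, List.not_mem_nil, or_false] at hne ⊢
      grind
    exact h ⟨a, b, c, x, y, hne', hx, hy, hcyc,
      (mapsCyc3_quintuple_iff hne' hxy (hnot hC.1) (hnot hC.2.1) (hnot hC.2.2)).2 hcyc',
      (mapsSwap_quintuple_iff hne').2 ⟨hxy, hnot hC.1, hnot hC.2.1, hnot hC.2.2⟩⟩
  · rintro h ⟨a, b, c, x, y, hne, hx, hy, hcyc, hcyc', hswap⟩
    obtain ⟨hxy, ha, hb, hc⟩ := (mapsSwap_quintuple_iff hne).1 hswap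
    have hinc := h x hx y hy hxy a ha
    have hsub := orbitOf_subset_of_not_sameCycle hxy ha
    rw [mapsCyc3_quintuple_iff hne hxy ha hb hc] at hcyc'
    have hac : τ.SameCycle a c := hcyc'.1 ▸ sameCycle_induced (.refl τ a) (.inl rfl)
    have hcb : τ.SameCycle c b := hcyc'.2.1 ▸ sameCycle_induced (.refl τ c) (by simp)
    rw [(isIncreasingCycleOn_lamPerm hx hy).isIncreasingCycleOn_orbitOf_iff hsub] at hinc
    refine hinc a b c ?_ (hne.sublist (by simp)) hcyc hcyc'
    simpa [Set.insert_subset_iff] using ⟨SameCycle.refl τ a, hac.trans hcb, hac⟩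

theorem not_ac3_iff : ¬ AC3 p q τ ↔ ∀ x ∈ extSet p q, ∀ y ∈ intSet p q, τ.SameCycle x y →
    NonCrossingOn τ (lamRank p q x y) {u | ¬ τ.SameCycle x u} := by
  have hsub {x y : Fin (p + q)} (hxy : τ.SameCycle x y) :
      {u | ¬ τ.SameCycle x u} ⊆ {u | u ≠ x ∧ u ≠ y} :=
    fun u hu => orbitOf_subset_of_not_sameCycle hxy hu (.refl τ u)
  constructor
  · intro h x hx y hy hxy
    by_contra hcross
    rw [(isIncreasingCycleOn_lamPerm hx hy).not_nonCrossingOn_iff (hsub hxy)] at hcross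
    obtain ⟨a, b, c, d, hne, hB, hcyc, hpat⟩ := hcross
    have hB' := hB.trans (hsub hxy)
    simp only [Set.insert_subset_iff, Set.singleton_subset_iff] at hB hB'
    have hne' : [a, b, c, d, x, y].Nodup := by
      have hxy' : x ≠ y := (lt_of_lt_of_le hx hy).ne ∘ congrArg Fin.val
      simp only [List.nodup_cons, List.mem_cons, List.not_mem_nil, or_false] at hne ⊢
      grind
    obtain ⟨hswap, hswap'⟩ := (mapsSwap2_and_mapsSwap_iff hne').2 ⟨hpat, hxy, hB.1, hB.2.1⟩
    exact h ⟨a, b, c, d, x, y, hne', hx, hy, hcyc, hswap, hswap'⟩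
  · rintro h ⟨a, b, c, d, x, y, hne, hx, hy, hcyc, hswap⟩
    obtain ⟨hpat, hxy, ha, hb⟩ := (mapsSwap2_and_mapsSwap_iff hne).1 hswap
    refine ((isIncreasingCycleOn_lamPerm hx hy).not_nonCrossingOn_iff (hsub hxy)).2
      ⟨a, b, c, d, hne.sublist (by simp), ?_, hcyc, hpat⟩ (h x hx y hy hxy)
    simpa [Set.insert_subset_iff] using ⟨ha, hb, fun h => ha (h.trans hpat.1.symm),
      fun h => hb (h.trans hpat.2.1.symm)⟩

end AnnularPatterns

section Standardness

theorem discNC_iff {n : ℕ} {σ : Equiv.Perm (Fin n)} :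
    DiscNC σ ↔ (∀ i, IsIncreasingCycleOn σ Fin.val (orbitOf σ i)) ∧
      NonCrossingOn σ Fin.val Set.univ := by
  refine and_congr ?_ ?_
  · have hstd {i b : Fin n} (hb : b ∈ orbitOf σ i) :
        induced σ (orbitOf σ i) b = induced (finRotate n) (orbitOf σ i) b ↔
          IsCyclicSucc Fin.val (orbitOf σ i) b (σ b) := by
      rw [induced_eq_apply (sameCycle_apply_right.2 hb),
        (isIncreasingCycleOn_finRotate n).eq_induced_iff (Set.subset_univ _) hb]
    constructor
    · exact fun h i => ⟨Fin.val_injective.injOn, fun b hb => (hstd hb).1 (h _ ⟨i, rfl⟩ b hb)⟩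
    · rintro h _ ⟨i, rfl⟩ b hb
      exact (hstd hb).2 ((h i).isCyclicSucc b hb)
  · simp only [OrbitsNoCrossing, NonCrossingOn, Set.mem_univ, true_imp_iff]
    push Not
    rfl

variable {p q : ℕ} {τ : Equiv.Perm (Fin (p + q))}

theorem annStandard_iff : AnnStandard p q τ ↔
    ((∀ b ∈ extSet p q, IsCyclicSucc Fin.val (orbitOf τ b ∩ extSet p q) b
        (induced τ (orbitOf τ b ∩ extSet p q) b)) ∧
      ∀ b ∈ intSet p q, IsCyclicSucc Fin.val (orbitOf τ b ∩ intSet p q) b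
        (induced τ (orbitOf τ b ∩ intSet p q) b)) ∧
    ∀ x ∈ extSet p q, ∀ y ∈ intSet p q, τ.SameCycle x y →
      (∃! a, a ∈ orbitOf τ x ∩ extSet p q ∧ τ a ∈ intSet p q) ∧
        ∃! a, a ∈ orbitOf τ x ∩ intSet p q ∧ τ a ∈ extSet p q := by
  have hext {a b : Fin (p + q)} (hb : b ∈ orbitOf τ a ∩ extSet p q) :=
    isIncreasingCycleOn_gammaExt.eq_induced_iff Set.inter_subset_right hb
      (j := induced τ (orbitOf τ a ∩ extSet p q) b)
  have hint {a b : Fin (p + q)} (hb : b ∈ orbitOf τ a ∩ intSet p q) :=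
    isIncreasingCycleOn_gammaInt.eq_induced_iff Set.inter_subset_right hb
      (j := induced τ (orbitOf τ a ∩ intSet p q) b)
  refine and_congr ⟨fun h => ⟨fun b hb => ?_, fun b hb => ?_⟩, ?_⟩ ⟨?_, ?_⟩
  · exact (hext ⟨.refl τ b, hb⟩).1 ((h _ ⟨b, rfl⟩).1 b ⟨.refl τ b, hb⟩)
  · exact (hint ⟨.refl τ b, hb⟩).1 ((h _ ⟨b, rfl⟩).2 b ⟨.refl τ b, hb⟩)
  · rintro ⟨h, h'⟩ _ ⟨a, rfl⟩
    refine ⟨fun b hb => (hext hb).2 ?_, fun b hb => (hint hb).2 ?_⟩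
    · rw [orbitOf_eq_of_sameCycle hb.1]
      exact h b hb.2
    · rw [orbitOf_eq_of_sameCycle hb.1]
      exact h' b hb.2
  · exact fun h x hx y hy hxy => h _ ⟨x, rfl⟩ ⟨x, .refl τ x, hx⟩ ⟨y, hxy, hy⟩
  · rintro h _ ⟨a, rfl⟩ ⟨x, hax, hx⟩ ⟨y, hay, hy⟩
    have := h x hx y hy (hax.symm.trans hay)
    rwa [← orbitOf_eq_of_sameCycle hax] at this

end Standardness

section CutOpen

variable {p q : ℕ} {τ : Equiv.Perm (Fin (p + q))} {x y : Fin (p + q)}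

/-- `lamPerm` keeps the linear order of each of the two arcs into which `x` and `y` divide
`{1, …, p + q}`. -/
theorem lamRank_lt_lamRank_iff (hx : x ∈ extSet p q) (hy : y ∈ intSet p q) {u v : Fin (p + q)}
    (hu : u ≠ x ∧ u ≠ y) (hv : v ≠ x ∧ v ≠ y) (huv : (x < u ∧ u < y) ↔ (x < v ∧ v < y)) :
    lamRank p q x y u < lamRank p q x y v ↔ (u : ℕ) < v := by
  rw [mem_extSet] at hx
  rw [mem_intSet] at hy
  simp only [ne_eq, Fin.ext_iff] at hu hv
  simp only [Fin.lt_def] at huv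
  simp only [lamRank]
  split_ifs <;> omega

/-- The orbit of the crossing arc `x → y` lies strictly between the two sides of any other
connecting orbit. -/
theorem lt_and_lt_of_link (hac2 : ¬ AC2 p q τ) (hx : (x : ℕ) + 1 = p) (hy : (y : ℕ) = p)
    (hlink : τ x = y) {u w o : Fin (p + q)} (hu : u ∈ extSet p q) (hw : w ∈ intSet p q)
    (huw : τ.SameCycle u w) (hxu : ¬ τ.SameCycle x u) (ho : τ.SameCycle x o) : u < o ∧ o < w := by
  have hxy : τ.SameCycle x y := hlink ▸ sameCycle_apply_self τ x
  have hinc := not_ac2_iff.1 hac2 u hu w hw huw x fun h => hxu h.symm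
  have hsucc : IsCyclicSucc (lamRank p q u w) (orbitOf τ x) x y :=
    hlink ▸ hinc.isCyclicSucc x (.refl τ x)
  rw [mem_extSet] at hu
  rw [mem_intSet] at hw
  have hne {v : Fin (p + q)} (hv : τ.SameCycle x v) : (u : ℕ) ≠ v ∧ (w : ℕ) ≠ v :=
    ⟨fun h => hxu (Fin.ext h ▸ hv), fun h => hxu (hv.trans (Fin.ext h ▸ huw.symm))⟩
  have hux := (hne (.refl τ x)).1
  have hwy := (hne hxy).2
  have hlamx : lamRank p q u w x = x - u - 1 := by
    rw [lamRank, if_pos (by omega), if_pos (by omega)]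
  have hlamy : lamRank p q u w y = p - 1 + (y + q - w - 1) := by
    rw [lamRank, if_neg (by omega), if_neg (by omega)]
  have ho' := hsucc.2.imp (fun h => h.2 o ho) fun h => h o ho
  have hno := hne ho
  rw [hlamx, hlamy, lamRank] at ho'
  rw [Fin.lt_def, Fin.lt_def]
  clear hsucc
  split_ifs at ho' <;> omega

theorem apply_le_and_le_of_entry (hstd : AnnStandard p q τ) (hx : (x : ℕ) + 1 = p)
    (hy : (y : ℕ) = p) (hlink : τ x = y) {i : Fin (p + q)} (hi : τ.SameCycle x i)
    (hiint : i ∈ intSet p q) (hτext : τ i ∈ extSet p q) :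
    ∀ k ∈ orbitOf τ x, (τ i : ℕ) ≤ k ∧ (k : ℕ) ≤ i := by
  obtain ⟨⟨hext, hint⟩, hconn⟩ := annStandard_iff.1 hstd
  have hxext : x ∈ extSet p q := by rw [mem_extSet]; omega
  have hyint : y ∈ intSet p q := hy.ge
  have hxy : τ.SameCycle x y := hlink ▸ sameCycle_apply_self τ x
  obtain ⟨hexit, hentry⟩ := hconn x hxext y hyint hxy
  obtain ⟨j, hj, hxj, hτj⟩ := exists_apply_eq_induced (B := orbitOf τ x ∩ extSet p q)
    ⟨.refl τ x, hxext⟩ fun h => (notMem_extSet.2 hyint) (hlink ▸ h.2)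
  have hji : j = i := hentry.unique ⟨⟨hxj, notMem_extSet.1 fun h => hj ⟨hxj, h⟩⟩,
    hτj ▸ (hext x hxext).1.2⟩ ⟨⟨hi, hiint⟩, hτext⟩
  obtain ⟨j', hj', hij', hτj'⟩ := exists_apply_eq_induced (B := orbitOf τ i ∩ intSet p q)
    ⟨.refl τ i, hiint⟩ fun h => (notMem_intSet.2 hτext) h.2
  have hxj' := hi.trans hij'
  have hjx' : j' = x := hexit.unique ⟨⟨hxj', notMem_intSet.1 fun h => hj' ⟨hij', h⟩⟩,
    hτj' ▸ (hint i hiint).1.2⟩ ⟨⟨.refl τ x, hxext⟩, hlink ▸ hyint⟩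
  have hmin := (hext x hxext).2
  have hmax := (hint i hiint).2
  rw [← hτj, hji] at hmin
  rw [← hτj', hjx', hlink, ← orbitOf_eq_of_sameCycle hi] at hmax
  rw [mem_intSet] at hiint
  rw [mem_extSet] at hτext
  replace hmin := hmin.resolve_left fun h => by omega
  replace hmax := hmax.resolve_left fun h => by omega
  intro k hk
  rcases lt_or_ge (k : ℕ) p with hkext | hkint
  · exact ⟨(hmin k ⟨hk, hkext⟩).1, by omega⟩
  · exact ⟨by omega, (hmax k ⟨hk, hkint⟩).2⟩

theorem isIncreasingCycleOn_orbitOf_of_link (hstd : AnnStandard p q τ) (hx : (x : ℕ) + 1 = p)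
    (hy : (y : ℕ) = p) (hlink : τ x = y) : IsIncreasingCycleOn τ Fin.val (orbitOf τ x) := by
  obtain ⟨⟨hext, hint⟩, hconn⟩ := annStandard_iff.1 hstd
  have hxext : x ∈ extSet p q := by rw [mem_extSet]; omega
  have hyint : y ∈ intSet p q := hy.ge
  have hxy : τ.SameCycle x y := hlink ▸ sameCycle_apply_self τ x
  obtain ⟨hexit, -⟩ := hconn x hxext y hyint hxy
  refine ⟨Fin.val_injective.injOn, fun i hi => ?_⟩
  have hτi : τ.SameCycle x (τ i) := sameCycle_apply_right.2 hi
  refine ⟨hτi, ?_⟩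
  rcases lt_or_ge (i : ℕ) p with hiext | hiint <;> rcases lt_or_ge (τ i : ℕ) p with hτext | hτint
  · have hsucc := hext i hiext
    rw [induced_eq_apply (Set.mem_inter (sameCycle_apply_self τ i) hτext),
      ← orbitOf_eq_of_sameCycle hi] at hsucc
    rcases hsucc.2 with ⟨hlt, hgap⟩ | hmax
    · refine .inl ⟨hlt, fun k hk => ?_⟩
      rcases lt_or_ge (k : ℕ) p with hkext | hkint
      exacts [hgap k ⟨hk, hkext⟩, .inr (by omega)]
    · have hxi := (hmax x ⟨.refl τ x, hxext⟩).2
      have hix : i = x := Fin.ext (by omega)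
      rw [hix, hlink] at hτext
      omega
  · have hix : i = x :=
      hexit.unique ⟨⟨hi, hiext⟩, hτint⟩ ⟨⟨.refl τ x, hxext⟩, hlink ▸ hyint⟩
    rw [hix, hlink]
    exact .inl ⟨by omega, fun k _ => by omega⟩
  · exact .inr (apply_le_and_le_of_entry hstd hx hy hlink hi hiint hτext)
  · have hsucc := hint i hiint
    rw [induced_eq_apply (Set.mem_inter (sameCycle_apply_self τ i) hτint),
      ← orbitOf_eq_of_sameCycle hi] at hsucc
    rcases hsucc.2 with ⟨hlt, hgap⟩ | hmax
    · refine .inl ⟨hlt, fun k hk => ?_⟩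
      rcases lt_or_ge (k : ℕ) p with hkext | hkint
      exacts [.inl (by omega), hgap k ⟨hk, hkint⟩]
    · have hτy : τ i = τ x := by
        rw [hlink]
        exact Fin.ext (le_antisymm (hmax y ⟨hxy, hyint⟩).1 (by omega))
      have := congrArg Fin.val (τ.injective hτy)
      omega

theorem sameCycle_of_link_left (hac1 : ¬ AC1 p q τ) (hac2 : ¬ AC2 p q τ) (hx : (x : ℕ) + 1 = p)
    (hy : (y : ℕ) = p) (hlink : τ x = y) {a b c d : Fin (p + q)} (hab : (a : ℕ) < b)
    (hbc : (b : ℕ) < c) (hcd : (c : ℕ) < d) (hac : τ.SameCycle a c) (hbd : τ.SameCycle b d)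
    (hxa : τ.SameCycle x a) :
    τ.SameCycle a b := by
  obtain ⟨hext, hint⟩ := not_ac1_iff.1 hac1
  have hyint : y ∈ intSet p q := hy.ge
  have hxy : τ.SameCycle x y := hlink ▸ sameCycle_apply_self τ x
  by_contra hnot
  have hxb : ¬ τ.SameCycle x b := fun h => hnot (hxa.symm.trans h)
  by_cases hb : b ∈ extSet p q
  · by_cases hd : d ∈ extSet p q
    · exact hnot (hext a (hab.trans hb) b hb c (hcd.trans hd) d hd hab hbc hcd hac hbd)
    · have := (lt_and_lt_of_link hac2 hx hy hlink hb (notMem_extSet.1 hd) hbd hxb hxa).1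
      exact hab.asymm this
  · rw [notMem_extSet, mem_intSet] at hb
    have hyb : (y : ℕ) < b := lt_of_le_of_ne (by omega) fun h => hxb (Fin.ext h.symm ▸ hxy)
    have hya : τ.SameCycle y a := hxy.symm.trans hxa
    exact hnot (hya.symm.trans (hint y hyint b hb c (hb.trans hbc.le) d
      (hb.trans (hbc.trans hcd).le) hyb hbc hcd (hya.trans hac) hbd))

theorem sameCycle_of_link_right (hac1 : ¬ AC1 p q τ) (hac2 : ¬ AC2 p q τ) (hx : (x : ℕ) + 1 = p)
    (hy : (y : ℕ) = p) (hlink : τ x = y) {a b c d : Fin (p + q)} (hab : (a : ℕ) < b)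
    (hbc : (b : ℕ) < c) (hcd : (c : ℕ) < d) (hac : τ.SameCycle a c) (hbd : τ.SameCycle b d)
    (hxb : τ.SameCycle x b) :
    τ.SameCycle a b := by
  obtain ⟨hext, hint⟩ := not_ac1_iff.1 hac1
  have hxext : x ∈ extSet p q := by rw [mem_extSet]; omega
  by_contra hnot
  have hxa : ¬ τ.SameCycle x a := fun h => hnot (h.symm.trans hxb)
  by_cases hc : c ∈ extSet p q
  · have hcx : (c : ℕ) < x :=
      lt_of_le_of_ne (by rw [mem_extSet] at hc; omega) fun h => hxa (Fin.ext h ▸ hac.symm)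
    exact hnot (hext a ((hab.trans hbc).trans hc) b (hbc.trans hc) c hc x hxext hab hbc hcx hac
      hxb.symm)
  · rw [notMem_extSet] at hc
    by_cases ha : a ∈ extSet p q
    · have := (lt_and_lt_of_link hac2 hx hy hlink ha hc hac hxa (hxb.trans hbd)).2
      exact hcd.asymm this
    · rw [notMem_extSet, mem_intSet] at ha
      exact hnot (hint a ha b (ha.trans hab.le) c hc d (le_trans hc hcd.le) hab hbc hcd hac hbd)

theorem nonCrossingOn_of_link (hann : AnnNC p q τ) (hx : (x : ℕ) + 1 = p)
    (hy : (y : ℕ) = p) (hlink : τ x = y) : NonCrossingOn τ Fin.val Set.univ := by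
  obtain ⟨-, hac1, hac2, hac3⟩ := hann
  have hxext : x ∈ extSet p q := by rw [mem_extSet]; omega
  have hxy : τ.SameCycle x y := hlink ▸ sameCycle_apply_self τ x
  intro a _ b _ c _ d _ hab hbc hcd hac hbd
  by_cases hxa : τ.SameCycle x a
  · exact sameCycle_of_link_left hac1 hac2 hx hy hlink hab hbc hcd hac hbd hxa
  by_cases hxb : τ.SameCycle x b
  · exact sameCycle_of_link_right hac1 hac2 hx hy hlink hab hbc hcd hac hbd hxb
  have hoff {u : Fin (p + q)} (hu : ¬ τ.SameCycle x u) : u ≠ x ∧ u ≠ y :=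
    orbitOf_subset_of_not_sameCycle hxy hu (.refl τ u)
  have hxc : ¬ τ.SameCycle x c := fun h => hxa (h.trans hac.symm)
  have hxd : ¬ τ.SameCycle x d := fun h => hxb (h.trans hbd.symm)
  have hlam {u v : Fin (p + q)} (hu : ¬ τ.SameCycle x u) (hv : ¬ τ.SameCycle x v) :=
    lamRank_lt_lamRank_iff hxext hy.ge (hoff hu) (hoff hv) (by simp only [Fin.lt_def]; omega)
  exact not_ac3_iff.1 hac3 x hxext y hy.ge hxy a hxa b hxb c hxc d hxd
    ((hlam hxa hxb).2 hab) ((hlam hxb hxc).2 hbc) ((hlam hxc hxd).2 hcd) hac hbd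

theorem discNC_of_annNC_of_link (hann : AnnNC p q τ) (hx : (x : ℕ) + 1 = p) (hy : (y : ℕ) = p)
    (hlink : τ x = y) : DiscNC τ := by
  refine discNC_iff.2 ⟨fun i => ?_, nonCrossingOn_of_link hann hx hy hlink⟩
  by_cases hxi : τ.SameCycle x i
  · rw [← orbitOf_eq_of_sameCycle hxi]
    exact isIncreasingCycleOn_orbitOf_of_link hann.1 hx hy hlink
  · have hxy : τ.SameCycle x y := hlink ▸ sameCycle_apply_self τ x
    have hsub := orbitOf_subset_of_not_sameCycle hxy hxi
    have hxext : x ∈ extSet p q := by rw [mem_extSet]; omega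
    refine (not_ac2_iff.1 hann.2.2.1 x hxext y hy.ge hxy i hxi).congr_rank fun a ha b hb => ?_
    refine (lamRank_lt_lamRank_iff hxext hy.ge (hsub ha) (hsub hb) ?_).symm
    simp only [Fin.lt_def]
    omega

end CutOpen

section GlueBack

namespace IsIncreasingCycleOn

variable {α β : Type*} [LinearOrder β] [Finite α] {f : Equiv.Perm α} {r : α → β} {A : Set α}
  {u v : α} {t : β}

theorem existsUnique_lt_le_apply (h : IsIncreasingCycleOn f r A) (hu : u ∈ A) (hut : r u < t)
    (hv : v ∈ A) (hvt : t ≤ r v) : ∃! a, a ∈ A ∧ r a < t ∧ t ≤ r (f a) := by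
  obtain ⟨m, ⟨hm, hmt⟩, hmax⟩ :=
    Set.exists_max_image {a ∈ A | r a < t} r (Set.toFinite _) ⟨u, hu, hut⟩
  refine ⟨m, ⟨hm, hmt, ?_⟩, ?_⟩
  · by_contra! hlt
    obtain ⟨hfm, hsucc⟩ := h.isCyclicSucc m hm
    have := hmax (f m) ⟨hfm, hlt⟩
    rcases hsucc with ⟨hsucc, -⟩ | hsucc
    · exact this.not_gt hsucc
    · exact ((hsucc v hv).2.trans_lt hmt).not_ge hvt
  · rintro a ⟨ha, hat, hfa⟩
    refine h.injOn ha hm (le_antisymm (hmax a ⟨ha, hat⟩) ?_)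
    rcases (h.isCyclicSucc a ha).2 with ⟨-, hgap⟩ | hlast
    · exact (hgap m hm).resolve_right fun hle => (hmt.trans_le hfa).not_ge hle
    · exact (hlast m hm).2

theorem existsUnique_le_apply_lt (h : IsIncreasingCycleOn f r A) (hu : u ∈ A) (hut : r u < t)
    (hv : v ∈ A) (hvt : t ≤ r v) : ∃! a, a ∈ A ∧ t ≤ r a ∧ r (f a) < t := by
  obtain ⟨m, hm, hmax⟩ := Set.exists_max_image A r (Set.toFinite _) ⟨u, hu⟩
  refine ⟨m, ⟨hm, hvt.trans (hmax v hv), ?_⟩, ?_⟩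
  · obtain ⟨hfm, hsucc⟩ := h.isCyclicSucc m hm
    rcases hsucc with ⟨hsucc, -⟩ | hsucc
    · exact absurd hsucc (hmax _ hfm).not_gt
    · exact (hsucc u hu).1.trans_lt hut
  · rintro a ⟨ha, hta, hfa⟩
    refine h.injOn ha hm (le_antisymm (hmax a ha) ?_)
    rcases (h.isCyclicSucc a ha).2 with ⟨hlt, -⟩ | hlast
    · exact absurd (hlt.trans hfa) hta.not_gt
    · exact (hlast m hm).2

end IsIncreasingCycleOn

variable {p q : ℕ} {τ : Equiv.Perm (Fin (p + q))} {x y : Fin (p + q)}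

theorem annStandard_of_discNC (h : DiscNC τ) : AnnStandard p q τ := by
  have hinc := (discNC_iff.1 h).1
  refine annStandard_iff.2 ⟨⟨fun b hb => ?_, fun b hb => ?_⟩, fun x hx y hy hxy => ?_⟩
  · exact (hinc b).isCyclicSucc_induced Set.inter_subset_left (.refl τ b) ⟨.refl τ b, hb⟩
      (.refl τ b)
  · exact (hinc b).isCyclicSucc_induced Set.inter_subset_left (.refl τ b) ⟨.refl τ b, hb⟩
      (.refl τ b)
  · have hexit := (hinc x).existsUnique_lt_le_apply (t := p) (.refl τ x) hx hxy hy
    have hentry := (hinc x).existsUnique_le_apply_lt (t := p) (.refl τ x) hx hxy hy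
    simp only [← and_assoc] at hexit hentry
    exact ⟨hexit, hentry⟩

/-- A connecting orbit separates the remaining orbits into those inside and those outside the
arc from `x` to `y`. -/
theorem between_iff_of_sameCycle (h : NonCrossingOn τ Fin.val Set.univ) (hxy : τ.SameCycle x y)
    {a c : Fin (p + q)} (hxa : ¬ τ.SameCycle x a) (hac : τ.SameCycle a c) :
    (x < a ∧ a < y) ↔ (x < c ∧ c < y) := by
  have main {a c : Fin (p + q)} (hxa : ¬ τ.SameCycle x a) (hac : τ.SameCycle a c)
      (ha : x < a ∧ a < y) : x < c ∧ c < y := by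
    have hxc : ¬ τ.SameCycle x c := fun h => hxa (h.trans hac.symm)
    refine ⟨lt_of_not_ge fun hcx => ?_, lt_of_not_ge fun hyc => ?_⟩
    · have hcx : c < x := lt_of_le_of_ne hcx fun h => hxc (h ▸ .refl τ c)
      exact hxc (h c trivial x trivial a trivial y trivial hcx ha.1 ha.2 hac.symm hxy).symm
    · have hyc : y < c := lt_of_le_of_ne hyc fun h => hxc (h ▸ hxy)
      exact hxa (h x trivial a trivial y trivial c trivial ha.1 ha.2 hyc hxy hac)
  exact ⟨main hxa hac, main (fun h => hxa (h.trans hac.symm)) hac.symm⟩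

theorem not_ac2_of_discNC (h : DiscNC τ) : ¬ AC2 p q τ := by
  obtain ⟨hinc, hnc⟩ := discNC_iff.1 h
  refine not_ac2_iff.2 fun x hx y hy hxy a hxa => (hinc a).congr_rank fun u hu v hv => ?_
  have hsub := orbitOf_subset_of_not_sameCycle hxy hxa
  refine lamRank_lt_lamRank_iff hx hy (hsub hu) (hsub hv) ?_
  rw [← between_iff_of_sameCycle hnc hxy hxa hu, between_iff_of_sameCycle hnc hxy hxa hv]

theorem not_between_of_lamRank_lt (hx : x ∈ extSet p q) (hy : y ∈ intSet p q)
    {u v w : Fin (p + q)} (hwy : w ≠ y) (huv : lamRank p q x y u < lamRank p q x y v)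
    (hvw : lamRank p q x y v < lamRank p q x y w) (hu : ¬ (x < u ∧ u < y))
    (hw : ¬ (x < w ∧ w < y)) : ¬ (x < v ∧ v < y) := by
  rw [mem_extSet] at hx
  rw [mem_intSet] at hy
  simp only [ne_eq, Fin.ext_iff] at hwy
  simp only [Fin.lt_def] at hu hw ⊢
  simp only [lamRank] at huv hvw
  split_ifs at huv hvw <;> omega

theorem not_ac3_of_nonCrossingOn (h : NonCrossingOn τ Fin.val Set.univ) : ¬ AC3 p q τ := by
  refine not_ac3_iff.2 fun x hx y hy hxy a ha b hb c hc d hd hab hbc hcd hac hbd => ?_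
  have hoff {u : Fin (p + q)} (hu : ¬ τ.SameCycle x u) : u ≠ x ∧ u ≠ y :=
    orbitOf_subset_of_not_sameCycle hxy hu (.refl τ u)
  have hside_ac := between_iff_of_sameCycle h hxy ha hac
  have hside_bd := between_iff_of_sameCycle h hxy hb hbd
  have hside_ab : (x < a ∧ a < y) ↔ (x < b ∧ b < y) := by
    refine not_iff_not.1 ⟨fun hna => ?_, fun hnb => ?_⟩
    · exact not_between_of_lamRank_lt hx hy (hoff hc).2 hab hbc hna (hside_ac.not.1 hna)
    · exact hside_ac.not.2 (not_between_of_lamRank_lt hx hy (hoff hd).2 hbc hcd hnb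
        (hside_bd.not.1 hnb))
  have hlam {u v : Fin (p + q)} (hu : ¬ τ.SameCycle x u) (hv : ¬ τ.SameCycle x v) :=
    lamRank_lt_lamRank_iff hx hy (hoff hu) (hoff hv)
  exact h a trivial b trivial c trivial d trivial ((hlam ha hb hside_ab).1 hab)
    ((hlam hb hc (hside_ab.symm.trans hside_ac)).1 hbc)
    ((hlam hc hd (by rw [← hside_ac, hside_ab, hside_bd])).1 hcd) hac hbd

theorem annNC_of_discNC (h : DiscNC τ) : AnnNC p q τ := by
  have hnc := (discNC_iff.1 h).2
  exact ⟨annStandard_of_discNC h, not_ac1_iff.2 ⟨hnc.mono (Set.subset_univ _),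
    hnc.mono (Set.subset_univ _)⟩, not_ac2_of_discNC h, not_ac3_of_nonCrossingOn hnc⟩

theorem annNC_iff_discNC_of_link (hx : (x : ℕ) + 1 = p) (hy : (y : ℕ) = p) (hlink : τ x = y) :
    AnnNC p q τ ↔ DiscNC τ :=
  ⟨fun h => discNC_of_annNC_of_link h hx hy hlink, annNC_of_discNC⟩

end GlueBack

section Rotation

section Semiconj

variable {α : Type*} {g f f' : α → α} {S : Set α} {a b c d : α}

theorem mapsCyc3_image_iff (hg : g.Injective) (h : Function.Semiconj g f f') :
    MapsCyc3 f' (g '' S) (g a) (g b) (g c) ↔ MapsCyc3 f S a b c := by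
  simp only [MapsCyc3, induced_image_of_semiconj hg h, hg.eq_iff]

theorem mapsCyc4_image_iff (hg : g.Injective) (h : Function.Semiconj g f f') :
    MapsCyc4 f' (g '' S) (g a) (g b) (g c) (g d) ↔ MapsCyc4 f S a b c d := by
  simp only [MapsCyc4, induced_image_of_semiconj hg h, hg.eq_iff]

theorem mapsSwap_image_iff (hg : g.Injective) (h : Function.Semiconj g f f') :
    MapsSwap f' (g '' S) (g a) (g c) ↔ MapsSwap f S a c := by
  simp only [MapsSwap, induced_image_of_semiconj hg h, hg.eq_iff]

theorem mapsSwap2_image_iff (hg : g.Injective) (h : Function.Semiconj g f f') :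
    MapsSwap2 f' (g '' S) (g a) (g b) (g c) (g d) ↔ MapsSwap2 f S a b c d := by
  simp only [MapsSwap2, induced_image_of_semiconj hg h, hg.eq_iff]

theorem formPerm_map_semiconj [DecidableEq α] {g : Equiv.Perm α} (l : List α) :
    Function.Semiconj g l.formPerm (l.map g).formPerm := by
  induction l with
  | nil => simp [Function.Semiconj]
  | cons a l ih =>
    cases l with
    | nil => simp [Function.Semiconj]
    | cons b l =>
      intro x
      simp only [List.map_cons, List.formPerm_cons_cons, Equiv.Perm.mul_apply] at ih ⊢
      rw [← ih x, Equiv.swap_apply_apply]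
      simp

end Semiconj

/-- A relabelling of the annulus that preserves both boundary circles and commutes with the
rotation of each of them. -/
structure IsAnnulusSymmetry (p q : ℕ) (g : Equiv.Perm (Fin (p + q))) : Prop where
  commute_gammaExt : Commute g (gammaExt p q)
  commute_gammaInt : Commute g (gammaInt p q)
  mem_extSet_iff : ∀ i, g i ∈ extSet p q ↔ i ∈ extSet p q

namespace IsAnnulusSymmetry

variable {p q : ℕ} {g τ : Equiv.Perm (Fin (p + q))}

theorem mem_intSet_iff (hg : IsAnnulusSymmetry p q g) (i : Fin (p + q)) :
    g i ∈ intSet p q ↔ i ∈ intSet p q := by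
  rw [← notMem_extSet, ← notMem_extSet, hg.mem_extSet_iff]

theorem inv (hg : IsAnnulusSymmetry p q g) : IsAnnulusSymmetry p q g⁻¹ :=
  ⟨hg.1.inv_left, hg.2.inv_left, fun i => by rw [← hg.mem_extSet_iff]; simp⟩

theorem semiconj_conj : Function.Semiconj g τ (g * τ * g⁻¹ : Equiv.Perm (Fin (p + q))) :=
  fun i => by simp

theorem semiconj_gammaAnn (hg : IsAnnulusSymmetry p q g) :
    Function.Semiconj g (gammaAnn p q) (gammaAnn p q) :=
  DFunLike.congr_fun (hg.commute_gammaExt.mul_right hg.commute_gammaInt).eq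

theorem semiconj_lamPerm (hg : IsAnnulusSymmetry p q g) (x y : Fin (p + q)) :
    Function.Semiconj g (lamPerm p q x y) (lamPerm p q (g x) (g y)) := by
  have hE (k : ℕ) : (gammaExt p q ^ (k + 1)) (g x) = g ((gammaExt p q ^ (k + 1)) x) :=
    (DFunLike.congr_fun (hg.commute_gammaExt.pow_right (k + 1)).eq x).symm
  have hI (k : ℕ) : (gammaInt p q ^ (k + 1)) (g y) = g ((gammaInt p q ^ (k + 1)) y) :=
    (DFunLike.congr_fun (hg.commute_gammaInt.pow_right (k + 1)).eq y).symm
  simpa only [lamPerm, hE, hI, List.map_append, List.map_map, Function.comp_def] using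
    formPerm_map_semiconj (g := g)
      (((List.range (p - 1)).map fun k => (gammaExt p q ^ (k + 1)) x) ++
        (List.range (q - 1)).map fun k => (gammaInt p q ^ (k + 1)) y)

theorem ac1_conj (hg : IsAnnulusSymmetry p q g) (h : AC1 p q τ) : AC1 p q (g * τ * g⁻¹) := by
  obtain ⟨a, b, c, d, hne, hγ, hτ⟩ := h
  refine ⟨g a, g b, g c, g d, hne.map g fun _ _ => g.injective.ne, ?_, ?_⟩
  · simpa only [Set.image_insert_eq, Set.image_singleton] using
      (mapsCyc4_image_iff g.injective hg.semiconj_gammaAnn).2 hγ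
  · simpa only [Set.image_insert_eq, Set.image_singleton] using
      (mapsSwap2_image_iff g.injective semiconj_conj).2 hτ

theorem ac2_conj (hg : IsAnnulusSymmetry p q g) (h : AC2 p q τ) : AC2 p q (g * τ * g⁻¹) := by
  obtain ⟨a, b, c, x, y, hne, hx, hy, hlam, hτ, hτ'⟩ := h
  refine ⟨g a, g b, g c, g x, g y, hne.map g fun _ _ => g.injective.ne,
    (hg.mem_extSet_iff x).2 hx, (hg.mem_intSet_iff y).2 hy, ?_, ?_, ?_⟩
  · simpa only [Set.image_insert_eq, Set.image_singleton] using
      (mapsCyc3_image_iff g.injective (hg.semiconj_lamPerm x y)).2 hlam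
  · simpa only [Set.image_insert_eq, Set.image_singleton] using
      (mapsCyc3_image_iff g.injective semiconj_conj).2 hτ
  · simpa only [Set.image_insert_eq, Set.image_singleton] using
      (mapsSwap_image_iff g.injective semiconj_conj).2 hτ'

theorem ac3_conj (hg : IsAnnulusSymmetry p q g) (h : AC3 p q τ) : AC3 p q (g * τ * g⁻¹) := by
  obtain ⟨a, b, c, d, x, y, hne, hx, hy, hlam, hτ, hτ'⟩ := h
  refine ⟨g a, g b, g c, g d, g x, g y, hne.map g fun _ _ => g.injective.ne,
    (hg.mem_extSet_iff x).2 hx, (hg.mem_intSet_iff y).2 hy, ?_, ?_, ?_⟩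
  · simpa only [Set.image_insert_eq, Set.image_singleton] using
      (mapsCyc4_image_iff g.injective (hg.semiconj_lamPerm x y)).2 hlam
  · simpa only [Set.image_insert_eq, Set.image_singleton] using
      (mapsSwap2_image_iff g.injective semiconj_conj).2 hτ
  · simpa only [Set.image_insert_eq, Set.image_singleton] using
      (mapsSwap_image_iff g.injective semiconj_conj).2 hτ'

theorem image_inter_extSet (hg : IsAnnulusSymmetry p q g) (B : Set (Fin (p + q))) :
    g '' B ∩ extSet p q = g '' (B ∩ extSet p q) := by
  rw [← Set.image_inter_preimage]
  congr 2
  exact Set.ext hg.mem_extSet_iff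

theorem image_inter_intSet (hg : IsAnnulusSymmetry p q g) (B : Set (Fin (p + q))) :
    g '' B ∩ intSet p q = g '' (B ∩ intSet p q) := by
  rw [← Set.image_inter_preimage]
  congr 2
  exact Set.ext hg.mem_intSet_iff

theorem exists_isOrbit_image_eq {A : Set (Fin (p + q))} (hA : IsOrbit (g * τ * g⁻¹) A) :
    ∃ B, IsOrbit τ B ∧ g '' B = A := by
  obtain ⟨a, rfl⟩ := hA
  refine ⟨_, ⟨g⁻¹ a, rfl⟩, ?_⟩
  ext b
  rw [Equiv.image_eq_preimage_symm]
  exact sameCycle_conj.symm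

theorem annStandard_conj (hg : IsAnnulusSymmetry p q g) (h : AnnStandard p q τ) :
    AnnStandard p q (g * τ * g⁻¹) := by
  have hE : Function.Semiconj g (gammaExt p q) (gammaExt p q) :=
    DFunLike.congr_fun hg.commute_gammaExt.eq
  have hI : Function.Semiconj g (gammaInt p q) (gammaInt p q) :=
    DFunLike.congr_fun hg.commute_gammaInt.eq
  refine ⟨fun A hA => ?_, fun A hA => ?_⟩ <;> obtain ⟨B, hB, rfl⟩ := exists_isOrbit_image_eq hA <;>
    rw [hg.image_inter_extSet, hg.image_inter_intSet]
  · simp only [Set.forall_mem_image, induced_image_of_semiconj g.injective semiconj_conj,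
      induced_image_of_semiconj g.injective hE, induced_image_of_semiconj g.injective hI,
      g.injective.eq_iff]
    exact h.1 B hB
  · intro hBE hBI
    have htransfer {S T : Set (Fin (p + q))} (hT : ∀ i, g i ∈ T ↔ i ∈ T)
        (hS : ∃! a, a ∈ S ∧ τ a ∈ T) : ∃! a, a ∈ g '' S ∧ (g * τ * g⁻¹) a ∈ T := by
      exact (g.bijective.existsUnique_iff).2 (by simpa [hT] using hS)
    obtain ⟨hexit, hentry⟩ := h.2 B hB hBE.of_image hBI.of_image
    exact ⟨htransfer hg.mem_intSet_iff hexit, htransfer hg.mem_extSet_iff hentry⟩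

theorem annNC_conj_iff (hg : IsAnnulusSymmetry p q g) :
    AnnNC p q (g * τ * g⁻¹) ↔ AnnNC p q τ := by
  have hconj : g⁻¹ * (g * τ * g⁻¹) * g⁻¹⁻¹ = τ := by group
  have hiff (P : Equiv.Perm (Fin (p + q)) → Prop)
      (hP : ∀ {g τ}, IsAnnulusSymmetry p q g → P τ → P (g * τ * g⁻¹)) :
      P (g * τ * g⁻¹) ↔ P τ :=
    ⟨fun h => hconj ▸ hP hg.inv h, hP hg⟩
  rw [AnnNC, AnnNC, hiff (AnnStandard p q) annStandard_conj, hiff (AC1 p q) ac1_conj,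
    hiff (AC2 p q) ac2_conj, hiff (AC3 p q) ac3_conj]

end IsAnnulusSymmetry

variable {p q : ℕ}

theorem commute_gammaExt_gammaInt : Commute (gammaExt p q) (gammaInt p q) := by
  refine Disjoint.commute fun i => ?_
  by_cases hi : i ∈ extSet p q
  · exact .inr (gammaInt_apply_of_mem_extSet hi)
  · exact .inl (gammaExt_apply_of_mem_intSet (notMem_extSet.1 hi))

theorem gammaExt_pow_apply_of_mem_intSet {i : Fin (p + q)} (hi : i ∈ intSet p q) (k : ℕ) :
    (gammaExt p q ^ k) i = i :=
  pow_apply_eq_self_of_apply_eq_self (gammaExt_apply_of_mem_intSet hi) k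

theorem gammaInt_pow_apply_of_mem_extSet {i : Fin (p + q)} (hi : i ∈ extSet p q) (k : ℕ) :
    (gammaInt p q ^ k) i = i :=
  pow_apply_eq_self_of_apply_eq_self (gammaInt_apply_of_mem_extSet hi) k

theorem isAnnulusSymmetry_gammaExt_pow_mul (k l : ℕ) :
    IsAnnulusSymmetry p q (gammaExt p q ^ k * gammaInt p q ^ l) := by
  refine ⟨.mul_left (.pow_left (.refl _) k) (commute_gammaExt_gammaInt.symm.pow_left l),
    .mul_left (commute_gammaExt_gammaInt.pow_left k) (.pow_left (.refl _) l), fun i => ?_⟩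
  rw [mul_apply]
  by_cases hi : i ∈ extSet p q
  · rw [gammaInt_pow_apply_of_mem_extSet hi, mem_extSet, gammaExt_pow_apply hi]
    exact iff_of_true (Nat.mod_lt _ (Nat.zero_lt_of_lt hi)) hi
  · have himg : (gammaInt p q ^ l) i ∈ intSet p q := by
      rw [mem_intSet, gammaInt_pow_apply (notMem_extSet.1 hi)]
      exact Nat.le_add_right _ _
    rw [gammaExt_pow_apply_of_mem_intSet himg]
    exact iff_of_false (notMem_extSet.2 himg) hi

theorem exists_isAnnulusSymmetry {x x' y y' : Fin (p + q)} (hx : x ∈ extSet p q)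
    (hx' : x' ∈ extSet p q) (hy : y ∈ intSet p q) (hy' : y' ∈ intSet p q) :
    ∃ g, IsAnnulusSymmetry p q g ∧ g x = x' ∧ g y = y' := by
  refine ⟨gammaExt p q ^ ((x' : ℕ) + p - x) * gammaInt p q ^ ((y' : ℕ) + q - y),
    isAnnulusSymmetry_gammaExt_pow_mul _ _, ?_, ?_⟩ <;> rw [mul_apply]
  · rw [gammaInt_pow_apply_of_mem_extSet hx, Fin.ext_iff, gammaExt_pow_apply hx]
    rw [mem_extSet] at hx hx'
    rw [show (x : ℕ) + (x' + p - x) = x' + p by omega, Nat.add_mod_right, Nat.mod_eq_of_lt hx']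
  · have hval : ((gammaInt p q ^ ((y' : ℕ) + q - y)) y : ℕ) = y' := by
      rw [gammaInt_pow_apply hy]
      rw [mem_intSet] at hy hy'
      rw [show (y : ℕ) - p + (y' + q - y) = y' - p + q by omega, Nat.add_mod_right,
        Nat.mod_eq_of_lt (by omega)]
      omega
    have himg : (gammaInt p q ^ ((y' : ℕ) + q - y)) y ∈ intSet p q := by
      rw [mem_intSet, hval]; exact hy'
    rw [gammaExt_pow_apply_of_mem_intSet himg, Fin.ext hval]

end Rotation

section ArcWord

variable {n : ℕ} {σ τ : Equiv.Perm (Fin n)}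

theorem DiscNC.le_or_apply_le (h : DiscNC τ) {i k : Fin n} (hk : τ.SameCycle i k) :
    k ≤ i ∨ τ i ≤ k := by
  rcases (((discNC_iff.1 h).1 i).isCyclicSucc i (.refl τ i)).2 with ⟨-, hgap⟩ | hlast
  · exact hgap k hk
  · exact .inl (hlast k hk).2

theorem DiscNC.apply_le_and_le (h : DiscNC τ) {i k : Fin n} (hi : τ i ≤ i)
    (hk : τ.SameCycle i k) : τ i ≤ k ∧ k ≤ i := by
  rcases (((discNC_iff.1 h).1 i).isCyclicSucc i (.refl τ i)).2 with ⟨hlt, -⟩ | hlast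
  · exact absurd hlt hi.not_gt
  · exact hlast k hk

theorem DiscNC.lt_apply_iff (h : DiscNC τ) {i : Fin n} :
    i < τ i ↔ ∃ k, τ.SameCycle i k ∧ i < k := by
  refine ⟨fun hi => ⟨τ i, sameCycle_apply_self τ i, hi⟩, fun ⟨k, hk, hik⟩ => ?_⟩
  by_contra! hi
  exact hik.not_ge (h.apply_le_and_le hi hk).2

theorem DiscNC.symm_apply_lt_iff (h : DiscNC τ) {i : Fin n} :
    τ.symm i < i ↔ ∃ k, τ.SameCycle i k ∧ k < i := by
  obtain ⟨j, rfl⟩ := τ.surjective i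
  rw [Equiv.symm_apply_apply]
  refine ⟨fun hj => ⟨j, (sameCycle_apply_self τ j).symm, hj⟩, fun ⟨k, hk, hki⟩ => ?_⟩
  by_contra! hj
  exact hki.not_ge (h.apply_le_and_le hj (sameCycle_apply_left.1 hk)).1

theorem DiscNC.not_arc_crossing (h : DiscNC τ) {i j : Fin n} (hij : i < j) (hji : j < τ i) :
    ¬ τ i < τ j := by
  intro hlt
  have hsame := (discNC_iff.1 h).2 i trivial j trivial (τ i) trivial (τ j) trivial hij hji hlt
    (sameCycle_apply_self τ i) (sameCycle_apply_self τ j)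
  rcases h.le_or_apply_le hsame with hle | hle
  · exact hij.not_ge hle
  · exact hji.not_ge hle

/-- The word of `τ` records at each point `i` whether an arc `τ⁻¹ i → i` comes in from the left and
whether an arc `i → τ i` goes out to the right. -/
def arcWord (τ : Equiv.Perm (Fin n)) (i : Fin n) : Bool × Bool :=
  (decide (τ.symm i < i), decide (i < τ i))

theorem arcWord_fst {i : Fin n} : (arcWord τ i).1 = true ↔ τ.symm i < i := decide_eq_true_iff

theorem arcWord_snd {i : Fin n} : (arcWord τ i).2 = true ↔ i < τ i := decide_eq_true_iff

/-- If the arc into `j` started further left in `τ` than in `σ`, then it would cross the arc of `τ`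
starting at `σ.symm j`. -/
theorem DiscNC.symm_apply_le (h : DiscNC τ) (hw : arcWord τ = arcWord σ) {j : Fin n}
    (ih : ∀ l < j, τ.symm l < l → τ.symm l = σ.symm l) (hj : σ.symm j < j) :
    σ.symm j ≤ τ.symm j := by
  obtain ⟨i, rfl⟩ := τ.surjective j
  obtain ⟨i', hi'⟩ := σ.surjective (τ i)
  rw [← hi', Equiv.symm_apply_apply, hi'] at hj
  rw [Equiv.symm_apply_apply, ← hi', Equiv.symm_apply_apply]
  by_contra! hlt
  have hup : i' < τ i' := by rwa [← arcWord_snd, hw, arcWord_snd, hi']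
  rcases lt_trichotomy (τ i') (τ i) with hlt' | heq | hgt
  · have hσ := ih _ hlt' (by rwa [Equiv.symm_apply_apply])
    rw [Equiv.symm_apply_apply, Equiv.eq_symm_apply] at hσ
    exact hlt'.ne (hσ.symm.trans hi')
  · exact hlt.ne' (τ.injective heq)
  · exact h.not_arc_crossing hlt hj hgt

theorem DiscNC.apply_eq_of_lt (hτ : DiscNC τ) (hσ : DiscNC σ) (hw : arcWord τ = arcWord σ)
    {i : Fin n} (hi : i < τ i) : σ i = τ i := by
  have hdown (l : Fin n) : τ.symm l < l ↔ σ.symm l < l := by rw [← arcWord_fst, hw, arcWord_fst]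
  have hinv (j : Fin n) (hj : τ.symm j < j) : τ.symm j = σ.symm j := by
    induction j using WellFoundedLT.induction with
    | ind j ih =>
      refine le_antisymm (hσ.symm_apply_le hw.symm (fun l hl h => ?_) hj)
        (hτ.symm_apply_le hw ih ((hdown j).1 hj))
      exact (ih l hl ((hdown l).2 h)).symm
  have h := hinv (τ i) (by rwa [Equiv.symm_apply_apply])
  rw [Equiv.symm_apply_apply, Equiv.eq_symm_apply] at h
  exact h

theorem DiscNC.sameCycle_of_forall_lt (h : DiscNC τ) (hup : ∀ i, i < τ i → σ i = τ i) {i j : Fin n}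
    (hij : τ.SameCycle i j) : σ.SameCycle i j := by
  have hlast (i : Fin n) : ∃ m, τ m ≤ m ∧ τ.SameCycle i m ∧ σ.SameCycle i m := by
    induction i using WellFoundedGT.induction with
    | ind i ih =>
      rcases le_or_gt (τ i) i with hi | hi
      · exact ⟨i, hi, .refl τ i, .refl σ i⟩
      · obtain ⟨m, hm, hτm, hσm⟩ := ih (τ i) hi
        rw [sameCycle_apply_left] at hτm
        rw [← hup i hi, sameCycle_apply_left] at hσm
        exact ⟨m, hm, hτm, hσm⟩
  obtain ⟨m, hm, him, him'⟩ := hlast i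
  obtain ⟨m', hm', hjm, hjm'⟩ := hlast j
  have hmm' : τ.SameCycle m m' := him.symm.trans (hij.trans hjm)
  obtain rfl := le_antisymm (h.apply_le_and_le hm' hmm'.symm).2 (h.apply_le_and_le hm hmm').2
  exact him'.trans hjm'.symm

theorem DiscNC.eq_of_orbitOf_eq (hτ : DiscNC τ) (hσ : DiscNC σ)
    (horb : ∀ i, orbitOf τ i = orbitOf σ i) : τ = σ := by
  ext i
  have hsucc := ((discNC_iff.1 hτ).1 i).isCyclicSucc i (.refl τ i)
  rw [horb] at hsucc
  exact hsucc.rank_eq (((discNC_iff.1 hσ).1 i).isCyclicSucc i (.refl σ i))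

theorem injOn_arcWord : Set.InjOn arcWord {τ : Equiv.Perm (Fin n) | DiscNC τ} := by
  intro τ hτ σ hσ hw
  refine DiscNC.eq_of_orbitOf_eq hτ hσ fun i => Set.ext fun j => ⟨?_, ?_⟩
  · exact DiscNC.sameCycle_of_forall_lt hτ fun i => DiscNC.apply_eq_of_lt hτ hσ hw
  · exact DiscNC.sameCycle_of_forall_lt hσ fun i => DiscNC.apply_eq_of_lt hσ hτ hw.symm

theorem DiscNC.apply_eq_iff_arcWord (h : DiscNC τ) {x y : Fin n} (hxy : (x : ℕ) + 1 = y) :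
    τ x = y ↔ (arcWord τ x).2 = true ∧ (arcWord τ y).1 = true := by
  rw [arcWord_fst, arcWord_snd]
  constructor
  · rintro rfl
    rw [Equiv.symm_apply_apply]
    omega
  · rintro ⟨hx, hy⟩
    obtain ⟨i, rfl⟩ := τ.surjective y
    rw [Equiv.symm_apply_apply] at hy
    by_contra hne
    have hix : i ≠ x := fun hix => hne (hix ▸ rfl)
    exact h.not_arc_crossing (show i < x by omega) (show x < τ i by omega)
      (show τ i < τ x by omega)

/-- The number of arcs `k → τ k` that pass over the gap just to the left of the point `i`. -/
def arcHeight (τ : Equiv.Perm (Fin n)) (i : ℕ) : ℕ :=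
  (Finset.univ.filter fun k : Fin n => (k : ℕ) < i ∧ i ≤ (τ k : ℕ)).card

/-- `G` lists the heights of a two-coloured Motzkin path with step word `w`: a letter `(d, u)` first
goes down if `d`, which must not lead below height `0`, and then goes up if `u`. -/
structure IsHeight (w : Fin n → Bool × Bool) (G : ℕ → ℕ) : Prop where
  toNat_le : ∀ i : Fin n, (w i).1.toNat ≤ G i
  step : ∀ i : Fin n, G (i + 1) + (w i).1.toNat = G i + (w i).2.toNat

theorem IsHeight.eq_of_zero_eq {w : Fin n → Bool × Bool} {G G' : ℕ → ℕ} (hG : IsHeight w G)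
    (hG' : IsHeight w G') (h : G 0 = G' 0) {k : ℕ} (hk : k ≤ n) : G k = G' k := by
  induction k with
  | zero => exact h
  | succ k ih =>
    have := hG.step ⟨k, hk⟩
    have := hG'.step ⟨k, hk⟩
    have := ih (by omega)
    simp only at *
    omega

theorem arcHeight_zero : arcHeight τ 0 = 0 := by simp [arcHeight]

theorem arcHeight_self : arcHeight τ n = 0 := by simp [arcHeight]

theorem isHeight_arcHeight (τ : Equiv.Perm (Fin n)) : IsHeight (arcWord τ) (arcHeight τ) := by
  refine ⟨fun i => ?_, fun i => ?_⟩
  · cases hi : (arcWord τ i).1 with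
    | false => exact Nat.zero_le _
    | true => exact Finset.card_pos.2 ⟨τ.symm i, by simpa using arcWord_fst.1 hi⟩
  · have hpoint (k : Fin n) :
        (if (k : ℕ) < i + 1 ∧ (i : ℕ) + 1 ≤ (τ k : ℕ) then 1 else 0) +
            (if k = τ.symm i then if τ.symm i < i then 1 else 0 else 0) =
          (if (k : ℕ) < i ∧ (i : ℕ) ≤ (τ k : ℕ) then 1 else 0) +
            (if k = i then if i < τ i then 1 else 0 else 0) := by
      have hk : k = τ.symm i ↔ τ k = i := τ.eq_symm_apply
      by_cases hki : k = i <;> by_cases hτk : τ k = i <;> grind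
    have hsum := Finset.sum_congr (rfl : Finset.univ = Finset.univ) fun k _ => hpoint k
    rw [Finset.sum_add_distrib, Finset.sum_add_distrib, ← Finset.card_filter,
      ← Finset.card_filter, Finset.sum_ite_eq', Finset.sum_ite_eq'] at hsum
    simpa [arcHeight, arcWord, Bool.toNat, Bool.cond_decide] using hsum

end ArcWord

section Fibers

variable {α β : Type*} [LinearOrder β] {r : α → β} {B : Set α}

theorem exists_isCyclicSucc (hB : B.Finite) (hne : B.Nonempty) (i : α) :
    ∃ j, IsCyclicSucc r B i j := by
  by_cases hlater : (B ∩ {k | r i < r k}).Nonempty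
  · obtain ⟨j, ⟨hj, hij⟩, hmin⟩ := Set.exists_min_image _ r (hB.inter_of_left _) hlater
    exact ⟨j, hj, .inl ⟨hij, fun k hk => (le_or_gt _ _).imp_right fun hik => hmin k ⟨hk, hik⟩⟩⟩
  · obtain ⟨j, hj, hmin⟩ := Set.exists_min_image B r hB hne
    exact ⟨j, hj, .inr fun k hk => ⟨hmin k hk, not_lt.1 fun hik => hlater ⟨k, hk, hik⟩⟩⟩

theorem IsCyclicSucc.rank_left_eq {i i' j : α} (hi : i ∈ B) (hi' : i' ∈ B)
    (h : IsCyclicSucc r B i j) (h' : IsCyclicSucc r B i' j) : r i = r i' := by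
  obtain ⟨-, h⟩ := h
  obtain ⟨-, h'⟩ := h'
  rcases h with ⟨_, h⟩ | h <;> rcases h' with ⟨_, h'⟩ | h' <;>
  · have := h i' hi'
    have := h' i hi
    grind

theorem exists_isIncreasingCycleOn_fibers {γ : Type*} [Finite α] (hr : r.Injective) (m : α → γ) :
    ∃ τ : Equiv.Perm α, ∀ i,
      IsIncreasingCycleOn τ r (orbitOf τ i) ∧ orbitOf τ i = {j | m i = m j} := by
  choose t ht using fun i =>
    exists_isCyclicSucc (r := r) (B := {j | m i = m j}) (Set.toFinite _) ⟨i, rfl⟩ i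
  have hmt (i : α) : m i = m (t i) := (ht i).1
  have hinj : t.Injective := by
    intro i i' htt
    have hm : m i = m i' := by rw [hmt i, htt, ← hmt i']
    have hi' := ht i'
    rw [← hm, ← htt] at hi'
    exact hr ((ht i).rank_left_eq (B := {j | m i = m j}) rfl hm hi')
  obtain ⟨τ, rfl⟩ : ∃ τ : Equiv.Perm α, ⇑τ = t :=
    ⟨.ofBijective t (Finite.injective_iff_bijective.1 hinj), rfl⟩
  have hcyc (i : α) : IsIncreasingCycleOn τ r {j | m i = m j} :=
    ⟨hr.injOn, fun k (hk : m i = m k) => hk ▸ ht k⟩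
  refine ⟨τ, fun i => ?_⟩
  have horb : orbitOf τ i = {j | m i = m j} := by
    refine Set.Subset.antisymm (fun j hj => ?_) fun j hj => (hcyc i).sameCycle rfl hj
    obtain ⟨k, rfl⟩ := SameCycle.exists_nat_pow_eq hj
    clear hj
    induction k with
    | zero => rfl
    | succ k ih =>
      rw [pow_succ', mul_apply]
      exact Eq.trans ih (hmt _)
  exact ⟨horb ▸ hcyc i, horb⟩

end Fibers

section HeightBlocks

variable {n : ℕ} {w : Fin n → Bool × Bool} {G : ℕ → ℕ} {i j : Fin n}

/-- The lowest height reached by a two-coloured Motzkin path during its step `i`. -/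
def valley (w : Fin n → Bool × Bool) (G : ℕ → ℕ) (i : Fin n) : ℕ := G i - (w i).1.toNat

/-- The last point up to `i` at which the path starts no higher than `valley w G i`. It labels the
block of `i` in the noncrossing partition encoded by the path, being the minimum of that block. -/
def blockStart (w : Fin n → Bool × Bool) (G : ℕ → ℕ) (i : Fin n) : ℕ :=
  Nat.findGreatest (fun k => G k ≤ valley w G i) i

theorem blockStart_le : blockStart w G i ≤ i := Nat.findGreatest_le _

theorem blockStart_lt : blockStart w G i < n := blockStart_le.trans_lt i.2

namespace IsHeight

theorem valley_add (h : IsHeight w G) (i : Fin n) : valley w G i + (w i).1.toNat = G i :=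
  Nat.sub_add_cancel (h.toNat_le i)

theorem apply_add_one (h : IsHeight w G) (i : Fin n) :
    G (i + 1) = valley w G i + (w i).2.toNat := by
  have := h.valley_add i
  have := h.step i
  omega

end IsHeight

theorem blockStart_eq_iff (h0 : G 0 = 0) {k : ℕ} : blockStart w G i = k ↔
    k ≤ i ∧ G k ≤ valley w G i ∧ ∀ l, k < l → l ≤ i → valley w G i < G l := by
  simp only [blockStart, Nat.findGreatest_eq_iff, not_le]
  refine and_congr_right fun _ => and_congr_left fun _ => ⟨fun h => ?_, fun h _ => h⟩
  rcases eq_or_ne k 0 with rfl | hk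
  · simp [h0]
  · exact h hk

theorem blockStart_eq_self_iff (h : IsHeight w G) (h0 : G 0 = 0) :
    blockStart w G i = i ↔ (w i).1 = false := by
  rw [blockStart_eq_iff h0, ← Bool.toNat_eq_zero]
  have hval := h.valley_add i
  constructor
  · rintro ⟨-, hle, -⟩
    omega
  · intro hdown
    exact ⟨le_rfl, by omega, fun l hl hl' => absurd hl hl'.not_gt⟩

theorem valley_blockStart (h : IsHeight w G) (h0 : G 0 = 0) (i : Fin n) :
    valley w G ⟨blockStart w G i, blockStart_lt⟩ = valley w G i := by
  obtain ⟨hle, hG, hlt⟩ := (blockStart_eq_iff (i := i) (w := w) h0).1 rfl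
  rcases hle.eq_or_lt with heq | hki
  · exact congrArg _ (Fin.ext heq)
  · have hstart := h.valley_add ⟨blockStart w G i, blockStart_lt⟩
    have hstep := h.apply_add_one ⟨blockStart w G i, blockStart_lt⟩
    have hnext := hlt (blockStart w G i + 1) (by omega) hki
    have := Bool.toNat_le (w ⟨blockStart w G i, blockStart_lt⟩).2
    simp only at *
    omega

theorem valley_eq_of_blockStart_eq (h : IsHeight w G) (h0 : G 0 = 0)
    (hij : blockStart w G i = blockStart w G j) : valley w G i = valley w G j := by
  simp only [← valley_blockStart h h0 i, ← valley_blockStart h h0 j, hij]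

theorem blockStart_blockStart (h : IsHeight w G) (h0 : G 0 = 0) (i : Fin n) :
    blockStart w G ⟨blockStart w G i, blockStart_lt⟩ = blockStart w G i := by
  rw [blockStart_eq_iff h0, valley_blockStart h h0]
  exact ⟨le_rfl, ((blockStart_eq_iff h0).1 rfl).2.1, fun l hl hl' => absurd hl hl'.not_gt⟩

theorem exists_blockStart_eq_and_lt_iff (h : IsHeight w G) (h0 : G 0 = 0) :
    (∃ j, blockStart w G i = blockStart w G j ∧ j < i) ↔ (w i).1 = true := by
  rw [← Bool.not_eq_false, ← blockStart_eq_self_iff h h0]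
  constructor
  · rintro ⟨j, hij, hji⟩ hi
    exact hji.not_ge (Fin.le_def.2 (hi.symm.trans_le (hij.trans_le blockStart_le)))
  · exact fun hi => ⟨⟨blockStart w G i, blockStart_lt⟩, (blockStart_blockStart h h0 i).symm,
      blockStart_le.lt_of_ne hi⟩

theorem IsHeight.exists_return (h : IsHeight w G) (hn : G n = 0) (hup : (w i).2 = true) :
    ∃ j, i < j ∧ valley w G j = valley w G i ∧
      ∀ l : ℕ, i < l → l ≤ j → valley w G i < G l := by
  have hstep := h.apply_add_one i
  rw [hup, Bool.toNat_true] at hstep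
  have hreturn : ∃ l : ℕ, i < l ∧ l < n ∧ G (l + 1) ≤ valley w G i := by
    have hi : (i : ℕ) + 1 ≠ n := by
      intro hi
      rw [hi, hn] at hstep
      omega
    refine ⟨n - 1, by omega, by omega, ?_⟩
    rw [Nat.sub_add_cancel (by omega), hn]
    exact Nat.zero_le _
  classical
  obtain ⟨hij, hjn, hreach⟩ := Nat.find_spec hreturn
  have hmin (l : ℕ) (hl : l < Nat.find hreturn) := Nat.find_min hreturn hl
  obtain ⟨j, hj⟩ : ∃ j : Fin n, Nat.find hreturn = j := ⟨⟨_, hjn⟩, rfl⟩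
  rw [hj] at hij hreach hmin
  have habove (l : ℕ) (hil : i < l) (hlj : l ≤ j) : valley w G i < G l := by
    rcases (Nat.succ_le_of_lt hil).eq_or_lt with rfl | hil'
    · exact hstep ▸ Nat.lt_succ_self _
    · have hl := hmin (l - 1) (by omega)
      rw [Nat.sub_add_cancel (by omega)] at hl
      by_contra! hle
      exact hl ⟨by omega, by omega, hle⟩
  refine ⟨j, hij, ?_, habove⟩
  have := habove j hij le_rfl
  have := h.valley_add j
  have := h.apply_add_one j
  have := Bool.toNat_le (w j).1
  omega

theorem exists_blockStart_eq_and_gt_iff (h : IsHeight w G) (h0 : G 0 = 0) (hn : G n = 0) :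
    (∃ j, blockStart w G i = blockStart w G j ∧ i < j) ↔ (w i).2 = true := by
  constructor
  · rintro ⟨j, hij, hlt⟩
    have habove := ((blockStart_eq_iff h0).1 hij.symm).2.2 (i + 1)
      (Nat.lt_succ_of_le blockStart_le) hlt
    rw [← valley_eq_of_blockStart_eq h h0 hij, h.apply_add_one i] at habove
    rw [← Bool.toNat_eq_one]
    have := Bool.toNat_le (w i).2
    omega
  · intro hup
    obtain ⟨j, hij, hval, habove⟩ := h.exists_return hn hup
    refine ⟨j, Eq.symm ?_, hij⟩
    obtain ⟨hle, hG, hlt⟩ := (blockStart_eq_iff (i := i) (w := w) h0).1 rfl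
    rw [blockStart_eq_iff h0, hval]
    exact ⟨hle.trans hij.le, hG, fun l hl hlj => (le_or_gt l i).elim (hlt l hl) (habove l · hlj)⟩

theorem blockStart_eq_of_crossing (h : IsHeight w G) (h0 : G 0 = 0) {a b c d : Fin n}
    (hab : a < b) (hbc : b < c) (hcd : c < d) (hac : blockStart w G a = blockStart w G c)
    (hbd : blockStart w G b = blockStart w G d) : blockStart w G a = blockStart w G b := by
  obtain ⟨-, hG, hltc⟩ := (blockStart_eq_iff h0).1 hac.symm
  obtain ⟨-, -, hltd⟩ := (blockStart_eq_iff h0).1 hbd.symm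
  have hstart_a : blockStart w G a ≤ a := blockStart_le
  have hstart_b : blockStart w G b ≤ b := blockStart_le
  have hvalac := valley_eq_of_blockStart_eq h h0 hac
  have hvalbd := valley_eq_of_blockStart_eq h h0 hbd
  have hval : valley w G b = valley w G c := by
    have := hltc b (by omega) hbc.le
    have := hltd c (by omega) hcd.le
    have := h.valley_add b
    have := h.valley_add c
    have := Bool.toNat_le (w b).1
    have := Bool.toNat_le (w c).1
    omega
  refine Eq.symm ((blockStart_eq_iff h0).2 ?_)
  rw [hval]
  exact ⟨by omega, hG, fun l hl hlb => hltc l hl (by omega)⟩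

theorem exists_discNC_arcWord_eq (h : IsHeight w G) (h0 : G 0 = 0) (hn : G n = 0) :
    ∃ τ, DiscNC τ ∧ arcWord τ = w := by
  obtain ⟨τ, hτ⟩ := exists_isIncreasingCycleOn_fibers Fin.val_injective (blockStart w G)
  have hsame (i j : Fin n) : τ.SameCycle i j ↔ blockStart w G i = blockStart w G j :=
    Set.ext_iff.1 (hτ i).2 j
  have hdisc : DiscNC τ := by
    refine discNC_iff.2 ⟨fun i => (hτ i).1, fun a _ b _ c _ d _ hab hbc hcd hac hbd => ?_⟩
    rw [hsame] at *
    exact blockStart_eq_of_crossing h h0 hab hbc hcd hac hbd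
  refine ⟨τ, hdisc, funext fun i => Prod.ext ?_ ?_⟩ <;> rw [Bool.eq_iff_iff]
  · rw [arcWord_fst, hdisc.symm_apply_lt_iff, ← exists_blockStart_eq_and_lt_iff h h0]
    simp only [hsame]
  · rw [arcWord_snd, hdisc.lt_apply_iff, ← exists_blockStart_eq_and_gt_iff h h0 hn]
    simp only [hsame]

end HeightBlocks

section PathCount

variable {n : ℕ}

/-- `w` is the step word of a two-coloured Motzkin path from height `a` to height `b`. -/
def IsPath (w : Fin n → Bool × Bool) (a b : ℕ) : Prop := ∃ G, IsHeight w G ∧ G 0 = a ∧ G n = b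

theorem isPath_zero_iff {w : Fin 0 → Bool × Bool} {a b : ℕ} : IsPath w a b ↔ a = b :=
  ⟨fun ⟨_, _, ha, hb⟩ => ha.symm.trans hb, fun h => ⟨fun _ => a, ⟨nofun, nofun⟩, rfl, h⟩⟩

theorem isPath_cons_iff {s : Bool × Bool} {w : Fin n → Bool × Bool} {a b : ℕ} :
    IsPath (Fin.cons s w : Fin (n + 1) → Bool × Bool) a b ↔
      s.1.toNat ≤ a ∧ IsPath w (a - s.1.toNat + s.2.toNat) b := by
  constructor
  · rintro ⟨G, ⟨hle, hstep⟩, rfl, hb⟩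
    have hle0 : s.1.toNat ≤ G 0 := hle 0
    have hstep0 : G (0 + 1) + s.1.toNat = G 0 + s.2.toNat := hstep 0
    refine ⟨hle0, fun k => G (k + 1), ⟨fun i => hle i.succ, fun i => hstep i.succ⟩, ?_, hb⟩
    change G (0 + 1) = _
    omega
  · rintro ⟨hle, G, hG, h0, hb⟩
    let H : ℕ → ℕ := fun k => k.casesOn a G
    refine ⟨H, ⟨Fin.cases hle hG.toNat_le, Fin.cases ?_ hG.step⟩, rfl, hb⟩
    change G 0 + s.1.toNat = a + s.2.toNat
    omega

theorem isPath_append_iff {p q : ℕ} {u : Fin p → Bool × Bool} {v : Fin q → Bool × Bool}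
    {a b c : ℕ} : (∃ G, IsHeight (Fin.append u v) G ∧ G 0 = a ∧ G p = c ∧ G (p + q) = b) ↔
      IsPath u a c ∧ IsPath v c b := by
  constructor
  · rintro ⟨G, hG, ha, hc, hb⟩
    refine ⟨⟨G, ⟨fun i => ?_, fun i => ?_⟩, ha, hc⟩, fun k => G (p + k),
      ⟨fun i => ?_, fun i => ?_⟩, hc, hb⟩
    · simpa using hG.toNat_le (Fin.castAdd q i)
    · simpa using hG.step (Fin.castAdd q i)
    · simpa using hG.toNat_le (Fin.natAdd p i)
    · simpa [add_assoc] using hG.step (Fin.natAdd p i)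
  · rintro ⟨⟨G, hG, ha, hc⟩, K, hK, hc', hb⟩
    let H : ℕ → ℕ := fun k => if k ≤ p then G k else K (k - p)
    have hleft {k : ℕ} (hk : k ≤ p) : H k = G k := if_pos hk
    have hright (k : ℕ) : H (p + k) = K k := by
      rcases k.eq_zero_or_pos with rfl | hk
      · rw [add_zero, hleft le_rfl, hc, hc']
      · rw [← Nat.add_sub_cancel_left (n := p) (m := k)]
        simp only [H, if_neg (show ¬ p + k ≤ p by omega), Nat.add_sub_cancel_left]
    refine ⟨H, ⟨Fin.addCases (fun i => ?_) fun i => ?_, Fin.addCases (fun i => ?_) fun i => ?_⟩,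
      (hleft (Nat.zero_le p)).trans ha, (hleft le_rfl).trans hc, (hright q).trans hb⟩
    · simpa [hleft i.2.le] using hG.toNat_le i
    · simpa [hright] using hK.toNat_le i
    · simpa [hleft i.2.le, hleft (Nat.succ_le_of_lt i.2)] using hG.step i
    · simpa [hright, add_assoc] using hK.step i

/-- The step word of the path run backwards. -/
def revWord (w : Fin n → Bool × Bool) (i : Fin n) : Bool × Bool := (w i.rev).swap

theorem revWord_involutive : Function.Involutive (revWord (n := n)) := fun w =>
  funext fun i => by simp [revWord]

theorem IsPath.reverse {w : Fin n → Bool × Bool} {a b : ℕ} (h : IsPath w a b) :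
    IsPath (revWord w) b a := by
  obtain ⟨G, hG, ha, hb⟩ := h
  have hval (i : Fin n) : n - (i : ℕ) = i.rev + 1 ∧ n - ((i : ℕ) + 1) = i.rev := by
    rw [Fin.val_rev]
    omega
  refine ⟨fun k => G (n - k), ⟨fun i => ?_, fun i => ?_⟩, by simpa using hb, by simpa using ha⟩ <;>
  · have := hG.toNat_le i.rev
    have := hG.step i.rev
    simp only [revWord, Prod.fst_swap, Prod.snd_swap, hval]
    omega

theorem ncard_setOf_cons {α : Type*} [Fintype α] (P : (Fin (n + 1) → α) → Prop) :
    {w | P w}.ncard = ∑ s, {w : Fin n → α | P (Fin.cons s w)}.ncard := by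
  classical
  simp only [Set.ncard_eq_toFinset_card', Set.toFinset_ofPred, Finset.card_filter]
  rw [← Fintype.sum_prod_type']
  exact (Fintype.sum_equiv (Fin.consEquiv fun _ => α) _ _ fun _ => rfl).symm

/-- The number of two-coloured Motzkin paths with `n` steps from height `b` down to height `0`. -/
noncomputable def pathCount (n b : ℕ) : ℕ := {w : Fin n → Bool × Bool | IsPath w b 0}.ncard

theorem pathCount_zero_zero : pathCount 0 0 = 1 := by simp [pathCount, isPath_zero_iff]

theorem pathCount_zero_succ (b : ℕ) : pathCount 0 (b + 1) = 0 := by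
  simp [pathCount, isPath_zero_iff]

theorem pathCount_succ (n b : ℕ) : pathCount (n + 1) b =
    ∑ s : Bool × Bool, if s.1.toNat ≤ b then pathCount n (b - s.1.toNat + s.2.toNat) else 0 := by
  rw [pathCount, ncard_setOf_cons]
  refine Finset.sum_congr rfl fun s _ => ?_
  split_ifs with hs <;> simp [pathCount, isPath_cons_iff, hs]

theorem pathCount_succ_zero (n : ℕ) : pathCount (n + 1) 0 = pathCount n 0 + pathCount n 1 := by
  simp [pathCount_succ, Fintype.sum_prod_type, add_comm]

theorem pathCount_succ_succ (n b : ℕ) : pathCount (n + 1) (b + 1) =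
    pathCount n b + 2 * pathCount n (b + 1) + pathCount n (b + 2) := by
  simp only [pathCount_succ, Fintype.sum_prod_type, Fintype.sum_bool, Bool.toNat_true,
    Bool.toNat_false, Nat.le_add_left, if_true, Nat.add_sub_cancel, Nat.sub_zero,
    add_zero, add_assoc, Nat.reduceAdd]
  ring

theorem choose_two_mul_succ (m k : ℕ) : (2 * (m + 1)).choose (k + 2) =
    (2 * m).choose k + 2 * (2 * m).choose (k + 1) + (2 * m).choose (k + 2) := by
  rw [Nat.mul_succ, Nat.choose_succ_succ', Nat.choose_succ_succ', Nat.choose_succ_succ' _ (k + 1)]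
  ring

theorem choose_two_mul_succ_self (m : ℕ) : (2 * (m + 1)).choose (m + 1) =
    2 * ((2 * m).choose m + (2 * m).choose (m + 1)) := by
  rw [Nat.mul_succ, Nat.choose_succ_succ', ← Nat.choose_symm_half, ← two_mul,
    Nat.choose_succ_succ']

theorem pathCount_add_choose (n b : ℕ) :
    pathCount n b + (2 * n).choose (n + b + 1) = (2 * n).choose (n + b) := by
  induction n generalizing b with
  | zero => cases b <;> simp [pathCount_zero_zero, pathCount_zero_succ]
  | succ n ih =>
    cases b with
    | zero =>
      have h0 := ih 0
      have h1 := ih 1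
      have hpascal := choose_two_mul_succ n n
      have hcentral := choose_two_mul_succ_self n
      rw [pathCount_succ_zero]
      simp only [add_zero, add_assoc, Nat.reduceAdd] at *
      omega
    | succ b =>
      have h0 := ih b
      have h1 := ih (b + 1)
      have h2 := ih (b + 2)
      have hpascal := choose_two_mul_succ n (n + b)
      have hpascal' := choose_two_mul_succ n (n + (b + 1))
      rw [pathCount_succ_succ, show n + 1 + (b + 1) = n + (b + 2) by ring]
      simp only [add_assoc, Nat.reduceAdd] at *
      omega

/-- The number of two-coloured Motzkin paths with `n` steps from height `b` down to height `0` whose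
first step starts with a descent. -/
noncomputable def descentCount (n b : ℕ) : ℕ :=
  {w : Fin (n + 1) → Bool × Bool | IsPath w b 0 ∧ (w 0).1 = true}.ncard

theorem descentCount_succ (n b : ℕ) :
    descentCount n (b + 1) = pathCount n b + pathCount n (b + 1) := by
  rw [descentCount, ncard_setOf_cons]
  simp [Fintype.sum_prod_type, isPath_cons_iff, pathCount, add_comm]

theorem ncard_isPath_last_eq_descentCount (n b : ℕ) :
    {w : Fin (n + 1) → Bool × Bool | IsPath w 0 b ∧ (w (Fin.last n)).2 = true}.ncard =
      descentCount n b := by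
  refine Set.ncard_congr (fun w _ => revWord w) ?_ ?_ ?_
  · rintro w ⟨hw, hlast⟩
    exact ⟨hw.reverse, by simpa [revWord] using hlast⟩
  · exact fun w w' _ _ h => revWord_involutive.injective h
  · rintro w ⟨hw, hfirst⟩
    exact ⟨revWord w, ⟨hw.reverse, by simpa [revWord] using hfirst⟩, revWord_involutive w⟩

theorem succ_mul_descentCount (n b : ℕ) : (n + 1) * descentCount n (b + 1) =
    (b + 1) * (2 * (n + 1)).choose (n + 1 + (b + 1)) := by
  have htelescope : descentCount n (b + 1) + (2 * n + 1).choose (n + b + 2) =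
      (2 * n + 1).choose (n + b + 1) := by
    have h0 := pathCount_add_choose n b
    have h1 := pathCount_add_choose n (b + 1)
    rw [descentCount_succ, Nat.choose_succ_succ', Nat.choose_succ_succ']
    simp only [← add_assoc] at *
    omega
  have hlower := Nat.add_one_mul_choose_eq (2 * n + 1) (n + b + 1)
  have hupper := Nat.choose_mul_succ_eq (2 * n + 1) (n + b + 2)
  rw [show 2 * (n + 1) = 2 * n + 1 + 1 by ring, show n + 1 + (b + 1) = n + b + 1 + 1 by ring]
  rcases le_or_gt b n with hbn | hnb
  · obtain ⟨t, rfl⟩ := Nat.exists_eq_add_of_le hbn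
    rw [show 2 * (b + t) + 1 + 1 - (b + t + b + 2) = t by omega] at hupper
    refine Nat.eq_of_mul_eq_mul_left two_pos ?_
    zify at *
    linear_combination (2 * (b + t + 1) : ℤ) * htelescope + hlower - hupper
  · simp only [Nat.choose_eq_zero_of_lt (show 2 * n + 1 < n + b + 1 by omega)] at *
    rw [Nat.choose_eq_zero_of_lt (by omega), Nat.eq_zero_of_add_eq_zero_right htelescope, mul_zero,
      mul_zero]

end PathCount

section LinkedCount

variable {n c : ℕ}

theorem image_arcWord_setOf_discNC {l : ℕ} (hl : l ≤ n) {x y : Fin n} (hxy : (x : ℕ) + 1 = y) :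
    arcWord '' {τ | (DiscNC τ ∧ arcHeight τ l = c) ∧ τ x = y} =
      {w | (∃ G, IsHeight w G ∧ G 0 = 0 ∧ G l = c ∧ G n = 0) ∧
        (w x).2 = true ∧ (w y).1 = true} := by
  ext w
  constructor
  · rintro ⟨τ, ⟨⟨hτ, hc⟩, hlink⟩, rfl⟩
    exact ⟨⟨arcHeight τ, isHeight_arcHeight τ, arcHeight_zero, hc, arcHeight_self⟩,
      (hτ.apply_eq_iff_arcWord hxy).1 hlink⟩
  · rintro ⟨⟨G, hG, h0, hc, hn⟩, hw⟩
    obtain ⟨τ, hτ, rfl⟩ := exists_discNC_arcWord_eq hG h0 hn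
    have harc := (isHeight_arcHeight τ).eq_of_zero_eq hG (arcHeight_zero.trans h0.symm) hl
    exact ⟨τ, ⟨⟨hτ, harc.trans hc⟩, (hτ.apply_eq_iff_arcWord hxy).2 hw⟩, rfl⟩

/-- The annular noncrossing permutations with `c` arcs from the outer to the inner circle. -/
def annNCWithArcs (p q c : ℕ) : Set (Equiv.Perm (Fin (p + q))) :=
  {τ | AnnNC p q τ ∧ arcHeight τ p = c}

theorem ncard_annNCWithArcs_last_zero (m k c : ℕ) :
    {τ ∈ annNCWithArcs (m + 1) (k + 1) c |
      τ (Fin.castAdd (k + 1) (Fin.last m)) = Fin.natAdd (m + 1) 0}.ncard =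
      descentCount m c * descentCount k c := by
  set x : Fin (m + 1 + (k + 1)) := Fin.castAdd (k + 1) (Fin.last m) with hx
  set y : Fin (m + 1 + (k + 1)) := Fin.natAdd (m + 1) 0 with hy
  have hdisc : {τ ∈ annNCWithArcs (m + 1) (k + 1) c | τ x = y} =
      {τ | (DiscNC τ ∧ arcHeight τ (m + 1) = c) ∧ τ x = y} := by
    ext τ
    exact and_congr_left fun hlink => and_congr_left' (annNC_iff_discNC_of_link rfl rfl hlink)
  have hword : arcWord '' {τ | (DiscNC τ ∧ arcHeight τ (m + 1) = c) ∧ τ x = y} =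
      (Fin.appendEquiv (m + 1) (k + 1)) '' ({u | IsPath u 0 c ∧ (u (Fin.last m)).2 = true} ×ˢ
        {v | IsPath v c 0 ∧ (v 0).1 = true}) := by
    rw [image_arcWord_setOf_discNC (Nat.le_add_right _ _) rfl]
    ext w
    obtain ⟨⟨u, v⟩, rfl⟩ := (Fin.appendEquiv (m + 1) (k + 1)).surjective w
    rw [(Equiv.injective _).mem_set_image]
    simp only [Fin.appendEquiv, Equiv.coe_fn_mk, Set.mem_ofPred_eq, isPath_append_iff, hx, hy,
      Fin.append_left, Fin.append_right, Set.mem_prod]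
    exact and_and_and_comm
  rw [hdisc, ← (injOn_arcWord.mono fun τ hτ => hτ.1.1).ncard_image, hword,
    Set.ncard_image_of_injective _ (Equiv.injective _), Set.ncard_prod,
    ncard_isPath_last_eq_descentCount, ← descentCount]

end LinkedCount

section DoubleCount

variable {p q c : ℕ} {g τ : Equiv.Perm (Fin (p + q))}

theorem arcHeight_le {n : ℕ} (τ : Equiv.Perm (Fin n)) (l : ℕ) : arcHeight τ l ≤ l := by
  refine (Finset.card_le_card_of_injOn (t := Finset.range l) Fin.val (fun k hk => ?_)
    Fin.val_injective.injOn).trans_eq (Finset.card_range l)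
  exact Finset.mem_coe.2 (Finset.mem_range.2 (Finset.mem_filter.1 hk).2.1)

theorem card_filter_apply_castAdd_eq_natAdd (τ : Equiv.Perm (Fin (p + q))) :
    (Finset.univ.filter fun z : Fin p × Fin q =>
      τ (Fin.castAdd q z.1) = Fin.natAdd p z.2).card = arcHeight τ p := by
  refine Finset.card_bij (fun z _ => Fin.castAdd q z.1) ?_ ?_ ?_
  · rintro ⟨a, b⟩ hab
    have hτa := (Finset.mem_filter.1 hab).2
    simp [hτa]
  · rintro ⟨a, b⟩ hab ⟨a', b'⟩ hab' h
    have hτa := (Finset.mem_filter.1 hab).2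
    have hτa' := (Finset.mem_filter.1 hab').2
    have hb : Fin.natAdd p b = Fin.natAdd p b' := hτa.symm.trans ((congrArg τ h).trans hτa')
    exact Prod.ext (Fin.castAdd_injective p q h) (Fin.natAdd_injective q p hb)
  · intro x hx
    obtain ⟨-, hxp, hτx⟩ := Finset.mem_filter.1 hx
    refine ⟨(⟨x, hxp⟩, ⟨τ x - p, by omega⟩), Finset.mem_filter.2 ⟨Finset.mem_univ _, ?_⟩, rfl⟩
    ext
    change (τ x : ℕ) = p + (τ x - p)
    omega

theorem IsAnnulusSymmetry.arcHeight_conj (hg : IsAnnulusSymmetry p q g) :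
    arcHeight (g * τ * g⁻¹) p = arcHeight τ p := by
  refine (Finset.card_equiv g fun i => ?_).symm
  rw [Finset.mem_filter_univ, Finset.mem_filter_univ]
  change i ∈ extSet p q ∧ τ i ∈ intSet p q ↔
    g i ∈ extSet p q ∧ (g * τ * g⁻¹) (g i) ∈ intSet p q
  rw [show (g * τ * g⁻¹) (g i) = g (τ i) by simp, hg.mem_extSet_iff, hg.mem_intSet_iff]

theorem ncard_annNCWithArcs_link {x x' y y' : Fin (p + q)} (hx : x ∈ extSet p q)
    (hx' : x' ∈ extSet p q) (hy : y ∈ intSet p q) (hy' : y' ∈ intSet p q) :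
    {τ ∈ annNCWithArcs p q c | τ x = y}.ncard = {τ ∈ annNCWithArcs p q c | τ x' = y'}.ncard := by
  obtain ⟨g, hg, rfl, rfl⟩ := exists_isAnnulusSymmetry hx hx' hy hy'
  refine Nat.card_congr ((MulAut.conj g).toEquiv.subtypeEquiv fun τ => ?_)
  change (AnnNC p q τ ∧ _) ∧ _ ↔ (AnnNC p q (g * τ * g⁻¹) ∧ arcHeight (g * τ * g⁻¹) p = c) ∧ _
  rw [hg.annNC_conj_iff, hg.arcHeight_conj]
  simp

theorem mul_ncard_annNCWithArcs {K : ℕ} (hK : ∀ (a : Fin p) (b : Fin q),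
    {τ ∈ annNCWithArcs p q c | τ (Fin.castAdd q a) = Fin.natAdd p b}.ncard = K) :
    (annNCWithArcs p q c).ncard * c = p * q * K := by
  classical
  have hcount := Finset.card_mul_eq_card_mul (s := (annNCWithArcs p q c).toFinset)
    (t := (Finset.univ : Finset (Fin p × Fin q))) (m := c) (n := K)
    (fun (τ : Equiv.Perm (Fin (p + q))) (z : Fin p × Fin q) =>
      τ (Fin.castAdd q z.1) = Fin.natAdd p z.2)
    (fun τ hτ => (card_filter_apply_castAdd_eq_natAdd τ).trans (Set.mem_toFinset.1 hτ).2)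
    (fun z _ => by
      rw [← hK z.1 z.2, Set.ncard_eq_toFinset_card']
      congr 1
      ext τ
      simp [Finset.bipartiteBelow])
  simpa [Set.ncard_eq_toFinset_card'] using hcount

theorem ncard_annNCWithArcs (hp : 0 < p) (hq : 0 < q) (hc : 0 < c) :
    (annNCWithArcs p q c).ncard = c * ((2 * p).choose (p + c) * (2 * q).choose (q + c)) := by
  obtain ⟨m, rfl⟩ := Nat.exists_eq_add_one.2 hp
  obtain ⟨k, rfl⟩ := Nat.exists_eq_add_one.2 hq
  obtain ⟨b, rfl⟩ := Nat.exists_eq_add_one.2 hc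
  have hlink (i : Fin (m + 1)) (j : Fin (k + 1)) :
      {τ ∈ annNCWithArcs (m + 1) (k + 1) (b + 1) | τ (Fin.castAdd (k + 1) i) =
        Fin.natAdd (m + 1) j}.ncard = descentCount m (b + 1) * descentCount k (b + 1) := by
    rw [← ncard_annNCWithArcs_last_zero]
    exact ncard_annNCWithArcs_link (mem_extSet.2 i.2) (mem_extSet.2 m.lt_succ_self)
      (mem_intSet.2 (Nat.le_add_right _ _)) (mem_intSet.2 le_rfl)
  refine Nat.eq_of_mul_eq_mul_right hc ?_
  calc (annNCWithArcs (m + 1) (k + 1) (b + 1)).ncard * (b + 1)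
      = ((m + 1) * descentCount m (b + 1)) * ((k + 1) * descentCount k (b + 1)) := by
        rw [mul_ncard_annNCWithArcs hlink]
        ring
    _ = _ := by
        rw [succ_mul_descentCount, succ_mul_descentCount]
        ring

theorem annConnected_iff : AnnConnected p q τ ↔ arcHeight τ p ≠ 0 := by
  rw [arcHeight, Finset.card_ne_zero]
  constructor
  · rintro ⟨_, ⟨i, rfl⟩, ⟨a, hia, ha⟩, b, hib, hb⟩
    obtain ⟨k, rfl⟩ := (hia.symm.trans hib : τ.SameCycle a b).exists_nat_pow_eq
    by_contra hempty
    have hmaps : Set.MapsTo τ (extSet p q) (extSet p q) := by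
      intro x hx
      by_contra hτx
      exact hempty ⟨x, by simpa using ⟨hx, notMem_extSet.1 hτx⟩⟩
    exact notMem_extSet.2 hb (hmaps.perm_pow k ha)
  · rintro ⟨x, hx⟩
    simp only [Finset.mem_filter, Finset.mem_univ, true_and] at hx
    exact ⟨_, ⟨x, rfl⟩, ⟨x, .refl τ x, hx.1⟩, τ x, sameCycle_apply_self τ x, hx.2⟩

theorem ncard_annNC_annConnected (p q : ℕ) :
    {τ | AnnNC p q τ ∧ AnnConnected p q τ}.ncard =
      ∑ c ∈ Finset.Icc 1 p, (annNCWithArcs p q c).ncard := by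
  classical
  simp only [Set.ncard_eq_toFinset_card']
  rw [Finset.card_eq_sum_card_fiberwise (f := (arcHeight · p)) (t := Finset.Icc 1 p)]
  · refine Finset.sum_congr rfl fun c hc => congrArg _ (Finset.ext fun τ => ?_)
    have := (Finset.mem_Icc.1 hc).1
    simp only [Finset.mem_filter, Set.mem_toFinset, annNCWithArcs, Set.mem_ofPred_eq,
      annConnected_iff]
    grind
  · intro τ hτ
    have hconn := annConnected_iff.1 (Set.mem_toFinset.1 hτ).2
    exact Finset.mem_coe.2 (Finset.mem_Icc.2 ⟨Nat.one_le_iff_ne_zero.2 hconn, arcHeight_le τ p⟩)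

end DoubleCount

section Telescope

theorem choose_add_succ_mul (n k : ℕ) : ((2 * n).choose (n + (k + 1)) : ℤ) * (n + k + 1) =
    (2 * n).choose (n + k) * (n - k) := by
  have h := Nat.choose_succ_right_eq (2 * n) (n + k)
  rcases le_or_gt k n with hk | hk
  · rw [show 2 * n - (n + k) = n - k by omega] at h
    zify [hk] at h
    exact_mod_cast h
  · rw [Nat.choose_eq_zero_of_lt (show 2 * n < n + k by omega),
      Nat.choose_eq_zero_of_lt (show 2 * n < n + (k + 1) by omega)]
    simp

theorem two_mul_add_mul_sum_choose_mul_choose (p q k : ℕ) :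
    2 * ((p : ℤ) + q) * ∑ c ∈ Finset.Icc 1 k,
      (c * ((2 * p).choose (p + c) * (2 * q).choose (q + c)) : ℤ) +
      (p - k) * (q - k) * ((2 * p).choose (p + k) * (2 * q).choose (q + k)) =
    p * q * ((2 * p).choose p * (2 * q).choose q) := by
  induction k with
  | zero => simp
  | succ k ih =>
    rw [← ih, Finset.sum_Icc_succ_top (Nat.le_add_left 1 k)]
    have hstep := congrArg₂ (· * ·) (choose_add_succ_mul p k) (choose_add_succ_mul q k)
    push_cast at hstep ⊢
    linear_combination hstep

theorem choose_two_mul_self {n : ℕ} (hn : 0 < n) :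
    (2 * n).choose n = 2 * (2 * n - 1).choose n := by
  obtain ⟨m, rfl⟩ := Nat.exists_eq_add_one.2 hn
  rw [choose_two_mul_succ_self, ← Nat.choose_succ_succ']
  rfl

theorem add_mul_sum_choose_mul_choose {p q : ℕ} (hp : 0 < p) (hq : 0 < q) :
    (p + q) * ∑ c ∈ Finset.Icc 1 p, c * ((2 * p).choose (p + c) * (2 * q).choose (q + c)) =
      2 * p * q * (2 * p - 1).choose p * (2 * q - 1).choose q := by
  have htelescope := two_mul_add_mul_sum_choose_mul_choose p q p
  rw [sub_self, zero_mul, zero_mul, add_zero, choose_two_mul_self hp,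
    choose_two_mul_self hq] at htelescope
  refine Nat.eq_of_mul_eq_mul_left two_pos ?_
  zify
  push_cast at htelescope
  linear_combination htelescope

end Telescope

/-- Corollary 6.8: the number of `(p,q)`-connected permutations in `S_ann-nc(p,q)` equals
`(2pq/(p+q))·C(2p-1, p)·C(2q-1, q)`; equivalently, `(p+q)` times that number equals
`2pq·C(2p-1, p)·C(2q-1, q)`. -/
theorem stmt_3 (p q : ℕ) (hp : 0 < p) (hq : 0 < q) :
    (p + q) * Set.ncard {τ : Equiv.Perm (Fin (p + q)) | AnnNC p q τ ∧ AnnConnected p q τ} =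
      2 * p * q * Nat.choose (2 * p - 1) p * Nat.choose (2 * q - 1) q := by
  rw [ncard_annNC_annConnected, ← add_mul_sum_choose_mul_choose hp hq]
  congr 1
  exact Finset.sum_congr rfl fun c hc => ncard_annNCWithArcs hp hq (Finset.mem_Icc.1 hc).1
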